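/- Let π: (X,B,μ,T) → (Z,A,λ,R) be a factor map between invertible Lebesgue systems, π₁: (X,B,μ,T) → (Y,D,ν,S) the Pinsker factor of (X,B,μ,T) with respect to π, and μ = ∫_Y μ_y dν(y) the disintegration of μ over (Y,D,ν,S). For ℓ ∈ ℕ and a finite measurable partition α of X, define h_μ(T^ℓ,α,y) := lim_{n→∞} H_{μ_y}(α | ⋁_{i=1}^n T^{-iℓ}α). Then ∫_Y h_μ(T^ℓ,α,y) dν(y) = h_μ(T^ℓ, α | π⁻¹(A)). -/

import Mathlib

/-!
Fix `U = T^ℓ`. Finite partitions are encoded as finite-valued measurable maps `f`, and conditional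
entropies relative to a factor are written as fibre averages `mH ρ K f = ∫ H_{K ω}(f) dρ(ω)` of
Shannon entropies, for a disintegration `K` of `μ` over the factor. Let `Ky` be the given
disintegration over `Y` and `Kz` one over `Z`. Let `F_n` be the join `⋁_{i=1}^n U^{-i} f`, put
`d_n = H(f | F_n, Y)` and `c_n = H(f | F_n, Z)`, and let `L` be the entropy rate of `f` over `Z`.
By dominated convergence the integral of the fibre entropies is `lim d_n`, and by the chain rule
and subadditivity `L` is the Cesàro limit of `c_n`.

The two sides are compared by approximating `Y` by finite partitions (`exists_approx`): for every
`ε > 0` there is a finite partition `γ` pulled back from `Y` with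
`|d_n - H(f | F_n ∨ γ, Z)| ≤ ε`. It is obtained by quantizing the finitely many functions
`y ↦ μ_y(A)` that enter `d_n`: on a set where such a function is nearly constant, the
`Kz`-conditional probability of `A` is nearly that same constant, because `Z` is a factor of `Y`
modulo null sets (`fibre_compare`).

* Conditioning on more decreases entropy, so `H(f | F_n ∨ γ, Z) ≤ c_n`. Hence `d_n ≤ c_n`, and
  averaging gives `lim d_n ≤ L`.
* The partition `γ` has zero entropy over `Z`, and conditioning additionally on such a partition
  cannot push `H(f | F_n, Z)` below the entropy rate (`entropy_le_of_zeroEnt`). Hence `L ≤ d_n + ε`.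

The defining property of the Pinsker factor enters twice. Sets pulled back from `Z` have zero
relative entropy, so they come from `Y` modulo null sets. Conversely, the sets with zero relative
entropy form a σ-algebra (`zeroSigma`), which contains the generators of the relative Pinsker
σ-algebra, so every set coming from `Y` has zero relative entropy.
-/

open MeasureTheory Filter Set Topology

section EntropyCore

variable {X : Type*}

/-- Conditional entropy `H_μ(α | C)` of a finite family of sets given a sub-σ-algebra `C`. -/
noncomputable def condH {m0 : MeasurableSpace X} (μ : Measure X) {ι : Type*} [Fintype ι]
    (α : ι → Set X) (C : MeasurableSpace X) : ℝ :=
  ∑ i, ∫ x, Real.negMulLog ((μ[(α i).indicator (fun _ => (1:ℝ)) | C]) x) ∂μ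

/-- Plain entropy `H_μ(α)` of a finite family of sets. -/
noncomputable def plainH {m0 : MeasurableSpace X} (μ : Measure X) {ι : Type*} [Fintype ι]
    (α : ι → Set X) : ℝ :=
  ∑ i, Real.negMulLog (μ (α i)).toReal

/-- Atoms of the dynamical join `⋁_{i=0}^{n-1} T^{-i} α`. -/
def joinAtoms (T : X → X) {ι : Type*} (α : ι → Set X) (n : ℕ) : (Fin n → ι) → Set X :=
  fun s => ⋂ i : Fin n, (T^[(i : ℕ)]) ⁻¹' α (s i)

/-- Conditional dynamical entropy `h_μ(T, α | C)` of a finite family `α`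
(as the infimum, which coincides with the defining limit, of `(1/n) H_μ(⋁_{i<n} T^{-i}α | C)`). -/
noncomputable def hPartCond {m0 : MeasurableSpace X} (μ : Measure X) (T : X → X)
    {ι : Type*} [Fintype ι] (α : ι → Set X) (C : MeasurableSpace X) : ℝ :=
  ⨅ n : ℕ, (1 / (n + 1 : ℝ)) * condH μ (joinAtoms T α (n + 1)) C

/-- Dynamical entropy `h_μ(T, α)` of a finite family `α`. -/
noncomputable def hPart {m0 : MeasurableSpace X} (μ : Measure X) (T : X → X)
    {ι : Type*} [Fintype ι] (α : ι → Set X) : ℝ :=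
  ⨅ n : ℕ, (1 / (n + 1 : ℝ)) * plainH μ (joinAtoms T α (n + 1))

/-- A finite measurable partition of `X` (with respect to the σ-algebra `m`). -/
structure FinPart (X : Type*) (m : MeasurableSpace X) where
  k : ℕ
  atom : Fin k → Set X
  meas : ∀ i, MeasurableSet[m] (atom i)
  disj : ∀ i j, i ≠ j → Disjoint (atom i) (atom j)
  cover : ⋃ i, atom i = Set.univ

/-- Conditional (measure-theoretic) entropy `h_μ(T | C)`. -/
noncomputable def hCond {m0 : MeasurableSpace X} (μ : Measure X) (T : X → X)
    (C : MeasurableSpace X) : ℝ :=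
  ⨆ α : FinPart X m0, hPartCond μ T α.atom C

end EntropyCore

section Pinsker

variable {X : Type*}

/-- Two σ-algebras agree mod `μ` if every set of one differs from a set
of the other by a `μ`-null set. -/
def EqModMeasure {m0 : MeasurableSpace X} (μ : Measure X)
    (m₁ m₂ : MeasurableSpace X) : Prop :=
  (∀ s : Set X, MeasurableSet[m₁] s →
    ∃ t : Set X, MeasurableSet[m₂] t ∧ μ ((s \ t) ∪ (t \ s)) = 0) ∧
  (∀ s : Set X, MeasurableSet[m₂] s →
    ∃ t : Set X, MeasurableSet[m₁] t ∧ μ ((s \ t) ∪ (t \ s)) = 0)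

/-- The relative Pinsker σ-algebra `P_μ(π)` of `(X,B,μ,T)` relative to a sub-σ-algebra `C`:
the smallest sub-σ-algebra containing every finite partition `α` with `h_μ(T, α | C) = 0`. -/
noncomputable def relPinsker {m0 : MeasurableSpace X} (μ : Measure X) (T : X → X)
    (C : MeasurableSpace X) : MeasurableSpace X :=
  MeasurableSpace.generateFrom
    {s : Set X | ∃ α : FinPart X m0, hPartCond μ T α.atom C = 0 ∧ ∃ i, α.atom i = s}

end Pinsker

/-- The σ-algebra generated by the join `⋁_{i=1}^n T^{-iℓ} α`. -/
def tailJoinSigma {X : Type*} (T : X → X) {k : ℕ} (α : Fin k → Set X)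
    (ℓ n : ℕ) : MeasurableSpace X :=
  MeasurableSpace.generateFrom
    {t : Set X | ∃ s : Fin n → Fin k, t = ⋂ i : Fin n, (T^[((i : ℕ) + 1) * ℓ]) ⁻¹' α (s i)}

set_option linter.unusedSectionVars false

/-! ### Inequalities for finite entropy sums -/

section FiniteEntropy

open Real Finset

/-- Merging atoms along `φ` does not increase entropy. -/
lemma negMulLog_sum_fiber_le {I J : Type} [Fintype I] [Fintype J] [DecidableEq I] (φ : J → I)
    (p : J → ℝ) (hp : ∀ j, 0 ≤ p j) :
    ∑ i, negMulLog (∑ j with φ j = i, p j) ≤ ∑ j, negMulLog (p j) := by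
  rw [← Finset.sum_fiberwise (s := Finset.univ) (g := φ) (f := fun j => negMulLog (p j))]
  refine Finset.sum_le_sum fun i _ => ?_
  simp only [negMulLog_eq_neg]
  rw [Finset.sum_mul, ← Finset.sum_neg_distrib]
  refine Finset.sum_le_sum fun j hj => ?_
  rcases (hp j).eq_or_lt with h0 | h0
  · simp [← h0]
  · have hle : p j ≤ ∑ j with φ j = i, p j :=
      Finset.single_le_sum (f := p) (fun j _ => hp j) hj
    have := Real.log_le_log h0 hle
    nlinarith

/-- For nonnegative weights `p` on `A × J` and a map `φ : J → I`, conditioning on the finer index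
`J` gives at most the entropy of `A` conditioned on the coarser index `I`. -/
lemma negMulLog_cond_le {A I J : Type} [Fintype A] [Fintype I] [Fintype J] [DecidableEq I]
    (φ : J → I) (p : A → J → ℝ) (hp : ∀ a j, 0 ≤ p a j) :
    (∑ a, ∑ j, negMulLog (p a j)) - ∑ j, negMulLog (∑ a, p a j) ≤
      (∑ a, ∑ i, negMulLog (∑ j with φ j = i, p a j))
        - ∑ i, negMulLog (∑ a, ∑ j with φ j = i, p a j) := by
  set r : J → ℝ := fun j => ∑ a, p a j with hr
  set q : A → I → ℝ := fun a i => ∑ j with φ j = i, p a j with hq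
  set s : I → ℝ := fun i => ∑ a, q a i with hs
  have hr0 : ∀ j, 0 ≤ r j := fun j => Finset.sum_nonneg fun a _ => hp a j
  have hq0 : ∀ a i, 0 ≤ q a i := fun a i => Finset.sum_nonneg fun j _ => hp a j
  have hs0 : ∀ i, 0 ≤ s i := fun i => Finset.sum_nonneg fun a _ => hq0 a i
  have e1 : ∑ j, negMulLog (r j) = ∑ a, ∑ j, -(p a j * log (r j)) := by
    rw [Finset.sum_comm]
    refine Finset.sum_congr rfl fun j _ => ?_
    rw [negMulLog_eq_neg, Finset.sum_neg_distrib, ← Finset.sum_mul]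
  have e2 : ∑ a, ∑ i, negMulLog (q a i) = ∑ a, ∑ j, -(p a j * log (q a (φ j))) := by
    refine Finset.sum_congr rfl fun a _ => ?_
    rw [← Finset.sum_fiberwise (s := Finset.univ) (g := φ)
      (f := fun j => -(p a j * log (q a (φ j))))]
    refine Finset.sum_congr rfl fun i _ => ?_
    rw [negMulLog_eq_neg]
    simp only
    rw [hq, Finset.sum_mul, ← Finset.sum_neg_distrib]
    refine Finset.sum_congr rfl fun j hj => ?_
    rw [(Finset.mem_filter.1 hj).2]
  have e3 : ∑ i, negMulLog (s i) = ∑ a, ∑ j, -(p a j * log (s (φ j))) := by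
    have : ∀ i, negMulLog (s i) = ∑ a, -(q a i * log (s i)) := by
      intro i
      rw [negMulLog_eq_neg, Finset.sum_neg_distrib, ← Finset.sum_mul]
    simp_rw [this]
    rw [Finset.sum_comm]
    refine Finset.sum_congr rfl fun a _ => ?_
    rw [← Finset.sum_fiberwise (s := Finset.univ) (g := φ)
      (f := fun j => -(p a j * log (s (φ j))))]
    refine Finset.sum_congr rfl fun i _ => ?_
    rw [hq]
    simp only
    rw [Finset.sum_mul, ← Finset.sum_neg_distrib]
    refine Finset.sum_congr rfl fun j hj => ?_
    rw [(Finset.mem_filter.1 hj).2]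
  change (∑ a, ∑ j, negMulLog (p a j)) - ∑ j, negMulLog (r j) ≤
    (∑ a, ∑ i, negMulLog (q a i)) - ∑ i, negMulLog (s i)
  rw [e1, e2, e3]
  have key : ∀ a j, negMulLog (p a j) + p a j * log (r j) + p a j * log (q a (φ j))
      - p a j * log (s (φ j)) ≤ r j * q a (φ j) / s (φ j) - p a j := by
    intro a j
    rcases (hp a j).eq_or_lt with h0 | h0
    · simp only [← h0, negMulLog_zero, zero_mul, add_zero, sub_zero]
      exact div_nonneg (mul_nonneg (hr0 j) (hq0 _ _)) (hs0 _)
    · have h1 : 0 < r j := h0.trans_le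
        (Finset.single_le_sum (f := fun a => p a j) (fun a _ => hp a j) (Finset.mem_univ a))
      have h2 : 0 < q a (φ j) := h0.trans_le
        (Finset.single_le_sum (f := fun j => p a j) (fun j _ => hp a j) (by simp))
      have h3 : 0 < s (φ j) := h2.trans_le
        (Finset.single_le_sum (f := fun a => q a (φ j)) (fun a _ => hq0 a _) (Finset.mem_univ a))
      have hlog := Real.log_le_sub_one_of_pos
        (show 0 < r j * q a (φ j) / (s (φ j) * p a j) by positivity)
      rw [Real.log_div (by positivity) (by positivity), Real.log_mul h1.ne' h2.ne',
        Real.log_mul h3.ne' h0.ne'] at hlog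
      have := mul_le_mul_of_nonneg_left hlog h0.le
      have e : p a j * (r j * q a (φ j) / (s (φ j) * p a j) - 1)
          = r j * q a (φ j) / s (φ j) - p a j := by
        field_simp
      rw [e] at this
      rw [negMulLog_eq_neg]
      simp only
      linarith
  have tot : ∑ a, ∑ j, (r j * q a (φ j) / s (φ j) - p a j) ≤ 0 := by
    rw [Finset.sum_comm]
    refine Finset.sum_nonpos fun j _ => ?_
    rw [Finset.sum_sub_distrib]
    have : ∑ a, r j * q a (φ j) / s (φ j) = r j * (s (φ j) / s (φ j)) := by
      rw [← Finset.sum_div, ← Finset.mul_sum, mul_div_assoc]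
    rw [this, sub_nonpos]
    exact mul_le_of_le_one_right (hr0 j) (div_self_le_one _)
  have := (Finset.sum_le_sum fun a (_ : a ∈ Finset.univ) =>
    Finset.sum_le_sum fun j (_ : j ∈ Finset.univ) => key a j).trans tot
  simp only [Finset.sum_sub_distrib, Finset.sum_add_distrib, Finset.sum_neg_distrib] at this ⊢
  linarith

end FiniteEntropy

lemma sum_mul_negMulLog_div {I : Type} [Fintype I] (p : I → ℝ) (hp : ∀ i, 0 ≤ p i) {r : ℝ}
    (hs : ∑ i, p i = r) :
    ∑ i, r * Real.negMulLog (p i / r) = ∑ i, Real.negMulLog (p i) - Real.negMulLog r := by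
  by_cases hr : r = 0
  · have h0 : ∀ i, p i = 0 := fun i =>
      (Finset.sum_eq_zero_iff_of_nonneg fun i _ => hp i).1 (hs.trans hr) i (Finset.mem_univ i)
    simp [hr, h0]
  · have e : ∀ i, r * Real.negMulLog (p i / r) = Real.negMulLog (p i) + p i * Real.log r := by
      intro i
      by_cases h0 : p i = 0
      · simp [h0]
      · rw [Real.negMulLog, Real.negMulLog, Real.log_div h0 hr]
        field_simp
        ring
    simp_rw [e]
    rw [Finset.sum_add_distrib, ← Finset.sum_mul, hs, Real.negMulLog]
    ring

/-! ### Shannon entropy of finite-valued maps -/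

section FiberEntropy

open Real

variable {X : Type*} [MeasurableSpace X]

/-- Shannon entropy under `m` of the finite-valued map `f`, i.e. of the partition of `X` into the
fibres of `f`. Finite partitions are encoded throughout by such maps: joins are pairs `(f, g)`,
and "`g` refines `f`" is `f.FactorsThrough g`. -/
noncomputable def fH {ι : Type} [Fintype ι] (m : Measure X) (f : X → ι) : ℝ :=
  ∑ i, negMulLog (m.real (f ⁻¹' {i}))

variable {ι κ κ' : Type} [Fintype ι] [Fintype κ] [Fintype κ']
  [MeasurableSpace ι] [MeasurableSingletonClass ι]
  [MeasurableSpace κ] [MeasurableSingletonClass κ]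
  [MeasurableSpace κ'] [MeasurableSingletonClass κ']

lemma measureReal_fiber_comp [DecidableEq ι] (m : Measure X) [IsFiniteMeasure m] {g : X → κ}
    (hg : Measurable g) (φ : κ → ι) (A : Set X) (hA : MeasurableSet A) (i : ι) :
    m.real (A ∩ (φ ∘ g) ⁻¹' {i}) = ∑ j with φ j = i, m.real (A ∩ g ⁻¹' {j}) := by
  rw [← measureReal_biUnion_finset]
  · congr 1
    ext x
    simp
  · intro a _ b _ hab
    refine Set.disjoint_left.2 fun x hx hx' => hab ?_
    rw [← hx.2, ← hx'.2]
  · intro b _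
    exact hA.inter (hg (measurableSet_singleton b))

lemma measureReal_sum_fiber (m : Measure X) [IsFiniteMeasure m] {g : X → κ}
    (hg : Measurable g) (A : Set X) (hA : MeasurableSet A) :
    ∑ j, m.real (A ∩ g ⁻¹' {j}) = m.real A := by
  rw [← measureReal_biUnion_finset]
  · congr 1
    ext x
    simp
  · intro a _ b _ hab
    refine Set.disjoint_left.2 fun x hx hx' => hab ?_
    rw [← hx.2, ← hx'.2]
  · intro b _
    exact hA.inter (hg (measurableSet_singleton b))

lemma fH_nonneg (m : Measure X) [IsProbabilityMeasure m] (f : X → ι) : 0 ≤ fH m f :=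
  Finset.sum_nonneg fun _ _ => negMulLog_nonneg measureReal_nonneg measureReal_le_one

lemma negMulLog_le_one {x : ℝ} (h : 0 ≤ x) : negMulLog x ≤ 1 := by
  linarith [negMulLog_le_one_sub_self h]

lemma fH_le_card (m : Measure X) [IsProbabilityMeasure m] (f : X → ι) :
    fH m f ≤ Fintype.card ι := by
  calc fH m f ≤ ∑ _i : ι, (1 : ℝ) :=
        Finset.sum_le_sum fun _ _ => negMulLog_le_one measureReal_nonneg
    _ = Fintype.card ι := by simp

lemma fH_mono (m : Measure X) [IsProbabilityMeasure m] {f : X → ι} {g : X → κ}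
    (hg : Measurable g) (hfg : f.FactorsThrough g) : fH m f ≤ fH m g := by
  classical
  have : Nonempty X := nonempty_of_isProbabilityMeasure m
  have : Nonempty ι := ⟨f (Classical.arbitrary X)⟩
  obtain ⟨φ, rfl⟩ := (Function.factorsThrough_iff _).1 hfg
  have h := negMulLog_sum_fiber_le φ (fun j => m.real (g ⁻¹' {j})) fun _ => measureReal_nonneg
  have e : ∀ i, m.real ((φ ∘ g) ⁻¹' {i}) = ∑ j with φ j = i, m.real (g ⁻¹' {j}) := by
    intro i
    simpa using measureReal_fiber_comp m hg φ Set.univ MeasurableSet.univ i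
  unfold fH
  simpa only [e] using h

lemma fH_pair (m : Measure X) (f : X → ι) (g : X → κ) :
    fH m (fun x => (f x, g x)) = ∑ i, ∑ j, negMulLog (m.real (f ⁻¹' {i} ∩ g ⁻¹' {j})) := by
  unfold fH
  rw [Fintype.sum_prod_type]
  refine Finset.sum_congr rfl fun i _ => Finset.sum_congr rfl fun j _ => ?_
  congr 2
  ext x
  simp [Prod.ext_iff]

/-- Conditional Shannon entropy decreases when the conditioning partition is refined. -/
lemma fH_cond (m : Measure X) [IsProbabilityMeasure m] {f : X → ι} {g : X → κ} {g' : X → κ'}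
    (hf : Measurable f) (hg' : Measurable g') (h : g.FactorsThrough g') :
    fH m (fun x => (f x, g' x)) - fH m g' ≤ fH m (fun x => (f x, g x)) - fH m g := by
  classical
  have : Nonempty X := nonempty_of_isProbabilityMeasure m
  have : Nonempty κ := ⟨g (Classical.arbitrary X)⟩
  obtain ⟨φ, rfl⟩ := (Function.factorsThrough_iff _).1 h
  have key := negMulLog_cond_le φ (fun i j => m.real (f ⁻¹' {i} ∩ g' ⁻¹' {j}))
    fun _ _ => measureReal_nonneg
  have hA : ∀ i, MeasurableSet (f ⁻¹' {i}) := fun i => hf (measurableSet_singleton i)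
  have s1 : ∀ (B : Set X), MeasurableSet B → ∑ i, m.real (f ⁻¹' {i} ∩ B) = m.real B := by
    intro B hB
    simp_rw [Set.inter_comm _ B]
    exact measureReal_sum_fiber m hf B hB
  rw [fH_pair, fH_pair]
  simp only [← measureReal_fiber_comp m hg' φ _ (hA _)] at key
  have hB1 : ∀ j, MeasurableSet (g' ⁻¹' {j}) := fun j => hg' (measurableSet_singleton j)
  have hB2 : ∀ i, MeasurableSet ((φ ∘ g') ⁻¹' {i}) := fun i => by
    rw [Set.preimage_comp]
    exact hg' (Set.toFinite _).measurableSet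
  simp only [s1 _ (hB1 _), s1 _ (hB2 _)] at key
  exact key

end FiberEntropy

/-! ### Entropy averaged over a family of fibre measures -/

section KernelEntropy

open Real ProbabilityTheory

variable {X Ω : Type*} [MeasurableSpace X] [MeasurableSpace Ω]

/-- Entropy of the finite-valued map `f` averaged over the fibre measures `K ω`. If `K`
disintegrates `μ` over a factor `Ω`, this is the conditional entropy of the partition given by `f`
relative to that factor. -/
noncomputable def mH {ι : Type} [Fintype ι] (ρ : Measure Ω) (K : Kernel Ω X) (f : X → ι) : ℝ :=
  ∫ ω, fH (K ω) f ∂ρ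

variable {ι κ κ' : Type} [Fintype ι] [Fintype κ] [Fintype κ']
  [MeasurableSpace ι] [MeasurableSingletonClass ι]
  [MeasurableSpace κ] [MeasurableSingletonClass κ]
  [MeasurableSpace κ'] [MeasurableSingletonClass κ']
  (ρ : Measure Ω) [IsProbabilityMeasure ρ] (K : Kernel Ω X) [IsMarkovKernel K]

lemma measurable_fH {f : X → ι} (hf : Measurable f) : Measurable fun ω => fH (K ω) f := by
  unfold fH
  refine Finset.measurable_sum _ fun i _ => continuous_negMulLog.measurable.comp ?_
  exact (K.measurable_coe (hf (measurableSet_singleton i))).ennreal_toReal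

lemma integrable_fH {f : X → ι} (hf : Measurable f) : Integrable (fun ω => fH (K ω) f) ρ := by
  refine Integrable.of_bound (measurable_fH K hf).aestronglyMeasurable (Fintype.card ι)
    (ae_of_all _ fun ω => ?_)
  rw [Real.norm_eq_abs, abs_of_nonneg (fH_nonneg _ _)]
  exact fH_le_card _ _

lemma mH_nonneg (f : X → ι) : 0 ≤ mH ρ K f := integral_nonneg fun _ => fH_nonneg _ _

lemma mH_mono {f : X → ι} {g : X → κ} (hf : Measurable f) (hg : Measurable g)
    (hfg : f.FactorsThrough g) : mH ρ K f ≤ mH ρ K g :=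
  integral_mono (integrable_fH ρ K hf) (integrable_fH ρ K hg) fun _ => fH_mono _ hg hfg

lemma mH_congr {f : X → ι} {g : X → κ} (hf : Measurable f) (hg : Measurable g)
    (hfg : f.FactorsThrough g) (hgf : g.FactorsThrough f) : mH ρ K f = mH ρ K g :=
  le_antisymm (mH_mono ρ K hf hg hfg) (mH_mono ρ K hg hf hgf)

lemma mH_cond {f : X → ι} {g : X → κ} {g' : X → κ'} (hf : Measurable f) (hg : Measurable g)
    (hg' : Measurable g') (h : g.FactorsThrough g') :
    mH ρ K (fun x => (f x, g' x)) - mH ρ K g' ≤ mH ρ K (fun x => (f x, g x)) - mH ρ K g := by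
  unfold mH
  rw [← integral_sub (integrable_fH ρ K (hf.prodMk hg')) (integrable_fH ρ K hg'),
    ← integral_sub (integrable_fH ρ K (hf.prodMk hg)) (integrable_fH ρ K hg)]
  exact integral_mono
    ((integrable_fH ρ K (hf.prodMk hg')).sub (integrable_fH ρ K hg'))
    ((integrable_fH ρ K (hf.prodMk hg)).sub (integrable_fH ρ K hg))
    fun ω => fH_cond (K ω) hf hg' h

lemma mH_unit : mH ρ K (fun _ : X => ()) = 0 := by
  simp [mH, fH]

lemma mH_const {f : X → ι} (hf : Measurable f) (h : ∀ x y, f x = f y) : mH ρ K f = 0 := by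
  rw [← mH_unit ρ K]
  exact mH_congr ρ K hf measurable_const (fun x y _ => h x y) fun _ _ _ => rfl

lemma mH_pair_le {f : X → ι} {g : X → κ} (hf : Measurable f) (hg : Measurable g) :
    mH ρ K (fun x => (f x, g x)) ≤ mH ρ K f + mH ρ K g := by
  have h := mH_cond ρ K hf (g := fun _ => ()) (g' := g) measurable_const hg fun _ _ _ => rfl
  have h' : mH ρ K (fun x => (f x, ())) = mH ρ K f :=
    mH_congr ρ K (hf.prodMk measurable_const) hf (fun x y h => by simpa using h)
      fun x y h => by simpa using h
  rw [mH_unit, h'] at h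
  linarith

end KernelEntropy

/-! ### Entropy rates and partitions of zero entropy -/

section Dynamics

open Real ProbabilityTheory

variable {X Ω : Type*} [MeasurableSpace X] [MeasurableSpace Ω]

/-- The `n`-name `(f x, f (U x), …, f (U^{n-1} x))`: the join `⋁_{i<n} U^{-i} f` of the partition
given by `f`. -/
def itin {ι : Type} (U : X → X) (f : X → ι) (n : ℕ) : X → (Fin n → ι) :=
  fun x i => f (U^[(i : ℕ)] x)

/-- `U` preserves the fibre-averaged entropy of every finite partition. -/
def EntInv (ρ : Measure Ω) (K : Kernel Ω X) (U : X → X) : Prop :=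
  ∀ (ι : Type) [Fintype ι] [MeasurableSpace ι] [MeasurableSingletonClass ι] (f : X → ι),
    Measurable f → mH ρ K (f ∘ U) = mH ρ K f

variable {ι κ κ' : Type} [Fintype ι] [Fintype κ] [Fintype κ']
  [MeasurableSpace ι] [MeasurableSingletonClass ι]
  [MeasurableSpace κ] [MeasurableSingletonClass κ]
  [MeasurableSpace κ'] [MeasurableSingletonClass κ']
  {ρ : Measure Ω} [IsProbabilityMeasure ρ] {K : Kernel Ω X} [IsMarkovKernel K]
  {U : X → X}

lemma EntInv.iterate (h : EntInv ρ K U) (hU : Measurable U) (n : ℕ) : EntInv ρ K (U^[n]) := by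
  intro ι _ _ _ f hf
  induction n with
  | zero => rfl
  | succ n ih =>
    rw [Function.iterate_succ, ← Function.comp_assoc, h ι _ (hf.comp (hU.iterate n)), ih]

lemma measurable_itin (hU : Measurable U) {f : X → ι} (hf : Measurable f) (n : ℕ) :
    Measurable (itin U f n) :=
  measurable_pi_lambda _ fun i => hf.comp (hU.iterate i)

lemma itin_eq_iff {U : X → X} {f : X → ι} {n : ℕ} {x y : X} :
    itin U f n x = itin U f n y ↔ ∀ i < n, f (U^[i] x) = f (U^[i] y) := by
  simp [itin, funext_iff, Fin.forall_iff]

lemma itin_comp_eq_iff {U : X → X} {f : X → ι} {n : ℕ} {x y : X} :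
    (itin U f n ∘ U) x = (itin U f n ∘ U) y ↔ ∀ i < n, f (U^[i + 1] x) = f (U^[i + 1] y) := by
  simp [itin, funext_iff, Fin.forall_iff]

lemma itin_succ_eq_iff {U : X → X} {f : X → ι} {n : ℕ} {x y : X} :
    itin U f (n + 1) x = itin U f (n + 1) y ↔
      f x = f y ∧ (itin U f n ∘ U) x = (itin U f n ∘ U) y := by
  rw [itin_eq_iff, itin_comp_eq_iff, Nat.forall_lt_succ_left]
  rfl

variable (hU : Measurable U) (hinv : EntInv ρ K U)

include hU hinv

/-- Chain rule for the entropies of the iterated joins. -/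
lemma mH_itin_succ {f : X → ι} (hf : Measurable f) (n : ℕ) :
    mH ρ K (itin U f (n + 1)) = mH ρ K (itin U f n) +
      (mH ρ K (fun x => (f x, (itin U f n ∘ U) x)) - mH ρ K (itin U f n ∘ U)) := by
  rw [hinv _ _ (measurable_itin hU hf n), add_sub_cancel]
  refine mH_congr ρ K (measurable_itin hU hf _)
    (hf.prodMk ((measurable_itin hU hf n).comp hU)) (fun x y h => ?_) fun x y h => ?_
  · exact itin_succ_eq_iff.2 (Prod.ext_iff.1 h)
  · exact Prod.ext_iff.2 (itin_succ_eq_iff.1 h)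

lemma mH_itin_eq_sum {f : X → ι} (hf : Measurable f) (N : ℕ) :
    mH ρ K (itin U f N) = ∑ n ∈ Finset.range N,
      (mH ρ K (fun x => (f x, (itin U f n ∘ U) x)) - mH ρ K (itin U f n ∘ U)) := by
  induction N with
  | zero =>
    exact mH_const ρ K (measurable_itin hU hf 0) fun x y => Subsingleton.elim _ _
  | succ N ih => rw [Finset.sum_range_succ, ← ih, mH_itin_succ hU hinv hf]

lemma subadditive_mH_itin {f : X → ι} (hf : Measurable f) :
    Subadditive fun n => mH ρ K (itin U f n) := by
  intro m n
  have h1 : mH ρ K (itin U f (m + n)) ≤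
      mH ρ K (fun x => (itin U f m x, (itin U f n ∘ U^[m]) x)) := by
    refine mH_mono ρ K (measurable_itin hU hf _) ((measurable_itin hU hf _).prodMk
      ((measurable_itin hU hf _).comp (hU.iterate m))) fun x y h => ?_
    rw [Prod.ext_iff] at h
    obtain ⟨h1, h2⟩ := h
    rw [itin_eq_iff] at h1 ⊢
    have h2 := itin_eq_iff.1 h2
    intro i hi
    rcases lt_or_ge i m with him | him
    · exact h1 i him
    · obtain ⟨j, rfl⟩ := Nat.exists_eq_add_of_le' him
      rw [Function.iterate_add_apply, Function.iterate_add_apply]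
      exact h2 j (by omega)
  refine h1.trans ((mH_pair_le ρ K (measurable_itin hU hf _)
    ((measurable_itin hU hf _).comp (hU.iterate m))).trans_eq ?_)
  rw [hinv.iterate hU m _ _ (measurable_itin hU hf n)]

lemma tendsto_mH_itin {f : X → ι} (hf : Measurable f) :
    Tendsto (fun n : ℕ => mH ρ K (itin U f n) / n) atTop
      (𝓝 (⨅ n : ℕ, (1 / (n + 1 : ℝ)) * mH ρ K (itin U f (n + 1)))) := by
  have hb : BddBelow (range fun n : ℕ => mH ρ K (itin U f n) / n) :=
    ⟨0, by rintro _ ⟨n, rfl⟩; exact div_nonneg (mH_nonneg ρ K _) n.cast_nonneg⟩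
  have h := (subadditive_mH_itin hU hinv hf).tendsto_lim hb
  convert h using 2
  rw [Subadditive.lim, iInf]
  congr 1
  ext r
  constructor
  · rintro ⟨n, rfl⟩
    exact ⟨n + 1, by simp, by push_cast; ring⟩
  · rintro ⟨n, hn, rfl⟩
    obtain ⟨m, rfl⟩ := Nat.exists_eq_add_of_le' (Set.mem_Ici.1 hn)
    exact ⟨m, by push_cast; ring⟩

omit hU hinv

/-- The partition given by `f` has zero fibre-averaged entropy under the dynamics of `U`. -/
def ZeroEnt (ρ : Measure Ω) (K : Kernel Ω X) (U : X → X) (f : X → ι) : Prop :=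
  Tendsto (fun n : ℕ => mH ρ K (itin U f n) / n) atTop (𝓝 0)

include hU

lemma ZeroEnt.of_le {U' : X → X} {g : X → κ} (hg : ZeroEnt ρ K U g) {f : X → ι}
    (h : ∀ n, mH ρ K (itin U' f n) ≤ mH ρ K (itin U g n)) : ZeroEnt ρ K U' f := by
  refine squeeze_zero (fun n => div_nonneg (mH_nonneg ρ K _) n.cast_nonneg) (fun n => ?_) hg
  have := h n
  gcongr

lemma ZeroEnt.of_factors {f : X → ι} {g : X → κ} (hgz : ZeroEnt ρ K U g) (hf : Measurable f)
    (hg : Measurable g) (h : f.FactorsThrough g) : ZeroEnt ρ K U f := by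
  refine hgz.of_le hU fun n => mH_mono ρ K (measurable_itin hU hf n) (measurable_itin hU hg n) ?_
  intro x y hxy
  rw [itin_eq_iff] at hxy ⊢
  exact fun i hi => h (hxy i hi)

lemma ZeroEnt.pair {f : X → ι} {g : X → κ} (hfz : ZeroEnt ρ K U f) (hgz : ZeroEnt ρ K U g)
    (hf : Measurable f) (hg : Measurable g) : ZeroEnt ρ K U (fun x => (f x, g x)) := by
  have := hfz.add hgz
  rw [add_zero] at this
  refine squeeze_zero (fun n => div_nonneg (mH_nonneg ρ K _) n.cast_nonneg) (fun n => ?_) this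
  rw [← add_div]
  refine div_le_div_of_nonneg_right ?_ n.cast_nonneg
  have mf := measurable_itin hU hf n
  have mg := measurable_itin hU hg n
  refine le_trans (mH_mono ρ K (measurable_itin hU (hf.prodMk hg) n) (mf.prodMk mg) ?_)
    (mH_pair_le ρ K mf mg)
  intro x y hxy
  rw [Prod.ext_iff] at hxy
  have h1 := itin_eq_iff.1 hxy.1
  have h2 := itin_eq_iff.1 hxy.2
  exact itin_eq_iff.2 fun i hi => Prod.ext (h1 i hi) (h2 i hi)

lemma ZeroEnt.iterate {f : X → ι} (hfz : ZeroEnt ρ K U f) (hf : Measurable f) {ℓ : ℕ}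
    (hℓ : 1 ≤ ℓ) : ZeroEnt ρ K (U^[ℓ]) f := by
  have h1 : Tendsto (fun n : ℕ => n * ℓ) atTop atTop :=
    tendsto_id.atTop_mul_const' (Nat.lt_of_lt_of_le Nat.zero_lt_one hℓ)
  have h2 := (hfz.comp h1).mul_const (ℓ : ℝ)
  rw [zero_mul] at h2
  refine squeeze_zero (fun n => div_nonneg (mH_nonneg ρ K _) n.cast_nonneg) (fun n => ?_) h2
  have hℓ0 : (ℓ : ℝ) ≠ 0 := by positivity
  have e : mH ρ K (itin U f (n * ℓ)) / ((n * ℓ : ℕ) : ℝ) * ℓ = mH ρ K (itin U f (n * ℓ)) / n := by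
    push_cast
    field_simp
  simp only [Function.comp_apply]
  rw [e]
  refine div_le_div_of_nonneg_right ?_ n.cast_nonneg
  refine mH_mono ρ K (measurable_itin (hU.iterate ℓ) hf n) (measurable_itin hU hf _) ?_
  intro x y hxy
  rw [itin_eq_iff] at hxy ⊢
  intro i hi
  rw [← Function.iterate_mul]
  refine hxy _ ?_
  rw [mul_comm]
  exact Nat.mul_lt_mul_of_pos_right hi hℓ

include hinv

/-- Adding a partition `g` of zero entropy to the conditioning does not push the conditional
entropy of `f` given its own future below the entropy rate of `f`. -/
lemma entropy_le_of_zeroEnt {f : X → ι} {g : X → κ} (hf : Measurable f) (hg : Measurable g)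
    (hgz : ZeroEnt ρ K U g) {L : ℝ}
    (hL : Tendsto (fun n : ℕ => mH ρ K (itin U f n) / n) atTop (𝓝 L)) (n : ℕ) :
    L ≤ mH ρ K (fun x => (f x, (itin U f n ∘ U) x, g x))
      - mH ρ K (fun x => ((itin U f n ∘ U) x, g x)) := by
  set c := mH ρ K (fun x => (f x, (itin U f n ∘ U) x, g x))
      - mH ρ K (fun x => ((itin U f n ∘ U) x, g x)) with hc
  have mf := fun N => measurable_itin hU hf N
  have mg := fun N => measurable_itin hU hg N
  -- `v N` is the entropy of the `N`-name of `f` given the `N`-name of `g`.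
  set v : ℕ → ℝ := fun N => mH ρ K (fun x => (itin U f N x, itin U g N x))
      - mH ρ K (itin U g N) with hv
  have step : ∀ N, n ≤ N → v (N + 1) ≤ v N + c := by
    intro N hN
    have h1 : mH ρ K (fun x => (itin U f (N + 1) x, itin U g (N + 1) x)) =
        mH ρ K (fun x => (f x, (itin U f N ∘ U) x, itin U g (N + 1) x)) := by
      refine mH_congr ρ K ((mf _).prodMk (mg _))
        (hf.prodMk (((mf _).comp hU).prodMk (mg _))) (fun x y h => ?_) fun x y h => ?_
      · simp only [Prod.mk.injEq] at h ⊢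
        exact ⟨itin_succ_eq_iff.2 ⟨h.1, h.2.1⟩, h.2.2⟩
      · simp only [Prod.mk.injEq] at h ⊢
        have := itin_succ_eq_iff.1 h.1
        exact ⟨this.1, this.2, h.2⟩
    have h2 : mH ρ K (fun x => (f x, (itin U f N ∘ U) x, itin U g (N + 1) x))
        - mH ρ K (fun x => ((itin U f N ∘ U) x, itin U g (N + 1) x)) ≤ c := by
      refine mH_cond ρ K hf (((mf n).comp hU).prodMk hg) (((mf N).comp hU).prodMk (mg _))
        fun x y h => ?_
      simp only [Prod.mk.injEq] at h ⊢
      have h1 := itin_comp_eq_iff.1 h.1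
      exact ⟨itin_comp_eq_iff.2 fun i hi => h1 i (by omega), (itin_succ_eq_iff.1 h.2).1⟩
    have h3 : mH ρ K (fun x => ((itin U f N ∘ U) x, itin U g (N + 1) x))
        - mH ρ K (itin U g (N + 1)) ≤ v N := by
      have := mH_cond ρ K ((mf N).comp hU) ((mg N).comp hU) (mg (N + 1))
        fun x y h => (itin_succ_eq_iff.1 h).2
      rw [hinv _ _ (mg N)] at this
      have e := hinv _ _ ((mf N).prodMk (mg N))
      exact this.trans_eq (congrArg (· - mH ρ K (itin U g N)) e)
    rw [hv]
    simp only
    rw [h1]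
    linarith
  have bound : ∀ N, v (n + N) ≤ v n + N * c := by
    intro N
    induction N with
    | zero => simp
    | succ N ih =>
      have := step (n + N) (by omega)
      rw [← add_assoc]
      push_cast
      linarith
  have upper : ∀ N ≥ n, mH ρ K (itin U f N) / N ≤
      (v n - n * c) * (N : ℝ)⁻¹ + c * ((N : ℝ) / N) + mH ρ K (itin U g N) / N := by
    intro N hN
    obtain ⟨k, rfl⟩ := Nat.exists_eq_add_of_le hN
    have h1 : mH ρ K (itin U f (n + k)) ≤
        mH ρ K (fun x => (itin U f (n + k) x, itin U g (n + k) x)) :=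
      mH_mono ρ K (mf _) ((mf _).prodMk (mg _)) fun x y h => (Prod.ext_iff.1 h).1
    have h2 := bound k
    have h3 : mH ρ K (itin U f (n + k)) ≤
        (v n - n * c) + c * ((n + k : ℕ) : ℝ) + mH ρ K (itin U g (n + k)) := by
      have : v (n + k) = mH ρ K (fun x => (itin U f (n + k) x, itin U g (n + k) x))
        - mH ρ K (itin U g (n + k)) := rfl
      push_cast
      linarith
    refine (div_le_div_of_nonneg_right h3 (Nat.cast_nonneg _)).trans_eq ?_
    ring
  have hone : Tendsto (fun N : ℕ => (N : ℝ) / N) atTop (𝓝 1) :=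
    tendsto_const_nhds.congr' <| (eventually_gt_atTop 0).mono fun N hN => by
      exact (div_self (by positivity)).symm
  have lim : Tendsto (fun N : ℕ => (v n - n * c) * (N : ℝ)⁻¹ + c * ((N : ℝ) / N)
      + mH ρ K (itin U g N) / N) atTop (𝓝 ((v n - n * c) * 0 + c * 1 + 0)) :=
    ((tendsto_inv_atTop_nhds_zero_nat.const_mul _).add (hone.const_mul _)).add hgz
  have := le_of_tendsto_of_tendsto hL lim ((eventually_ge_atTop n).mono upper)
  simpa using this

end Dynamics

/-! ### The σ-algebra of sets of zero entropy -/

section ZeroSigma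

open Real ProbabilityTheory

variable {X Ω : Type*} [MeasurableSpace X] [MeasurableSpace Ω]

open Classical in
/-- The two-set partition `{s, sᶜ}`, encoded as a map to `Fin 2`. -/
noncomputable def ind (s : Set X) : X → Fin 2 := fun x => if x ∈ s then 1 else 0

lemma ind_eq_iff {s : Set X} {x y : X} : ind s x = ind s y ↔ (x ∈ s ↔ y ∈ s) := by
  unfold ind
  by_cases h1 : x ∈ s <;> by_cases h2 : y ∈ s <;> simp [h1, h2]

lemma measurable_ind {s : Set X} (hs : MeasurableSet s) : Measurable (ind s) :=
  Measurable.ite hs measurable_const measurable_const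

lemma ind_preimage_one (s : Set X) : ind s ⁻¹' {1} = s := by
  ext x
  by_cases h : x ∈ s <;> simp [ind, h]

lemma ind_preimage_zero (s : Set X) : ind s ⁻¹' {0} = sᶜ := by
  ext x
  by_cases h : x ∈ s <;> simp [ind, h]

variable {ι κ : Type} [Fintype ι] [Fintype κ]
  [MeasurableSpace ι] [MeasurableSingletonClass ι]
  [MeasurableSpace κ] [MeasurableSingletonClass κ]
  {ρ : Measure Ω} [IsProbabilityMeasure ρ] {K : Kernel Ω X} [IsMarkovKernel K]
  {U : X → X}

/-- Continuity of the fibre-averaged entropy under pointwise eventual equality of finite partitions. -/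
lemma tendsto_mH {f : ℕ → X → ι} {g : X → ι} (hf : ∀ n, Measurable (f n))
    (h : ∀ x, ∀ᶠ n in atTop, f n x = g x) (ρ : Measure Ω) [IsProbabilityMeasure ρ]
    (K : Kernel Ω X) [IsMarkovKernel K] :
    Tendsto (fun n => mH ρ K (f n)) atTop (𝓝 (mH ρ K g)) := by
  refine tendsto_integral_of_dominated_convergence (fun _ => (Fintype.card ι : ℝ))
    (fun n => (measurable_fH K (hf n)).aestronglyMeasurable) (integrable_const _)
    (fun n => ae_of_all _ fun ω => ?_) (ae_of_all _ fun ω => ?_)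
  · rw [Real.norm_eq_abs, abs_of_nonneg (fH_nonneg _ _)]
    exact fH_le_card _ _
  · refine tendsto_finsetSum _ fun i _ => (continuous_negMulLog.tendsto _).comp ?_
    refine (ENNReal.tendsto_toReal (measure_ne_top _ _)).comp ?_
    refine tendsto_measure_of_tendsto_indicator_of_isFiniteMeasure atTop _
      (fun n => hf n (measurableSet_singleton i)) fun x => ?_
    filter_upwards [h x] with n hn
    simp [hn]

variable (hU : Measurable U) (hinv : EntInv ρ K U)

include hU

lemma zeroEnt_ind_compl {s : Set X} (hs : MeasurableSet s) (h : ZeroEnt ρ K U (ind s)) :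
    ZeroEnt ρ K U (ind sᶜ) :=
  h.of_factors hU (measurable_ind hs.compl) (measurable_ind hs) fun x y hxy => by
    rw [ind_eq_iff] at hxy ⊢
    simp [hxy]

lemma zeroEnt_const {f : X → ι} (hf : Measurable f) (h : ∀ x y, f x = f y) :
    ZeroEnt ρ K U f := by
  have : ∀ n, mH ρ K (itin U f n) = 0 := fun n =>
    mH_const ρ K (measurable_itin hU hf n) fun x y => funext fun i => h _ _
  simp [ZeroEnt, this]

lemma zeroEnt_ind_partial_union {A : ℕ → Set X} (hA : ∀ i, MeasurableSet (A i))
    (hz : ∀ i, ZeroEnt ρ K U (ind (A i))) (n : ℕ) : ZeroEnt ρ K U (ind (⋃ i < n, A i)) := by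
  induction n with
  | zero =>
    refine zeroEnt_const hU (measurable_ind ?_) fun x y => ?_
    · simp
    · simp [ind]
  | succ n ih =>
    have hm : ∀ n : ℕ, MeasurableSet (⋃ i < n, A i) := fun n =>
      MeasurableSet.iUnion fun i => MeasurableSet.iUnion fun _ => hA i
    refine (ih.pair hU (hz n) (measurable_ind (hm n)) (measurable_ind (hA n))).of_factors hU
      (measurable_ind (hm _)) ((measurable_ind (hm n)).prodMk (measurable_ind (hA n)))
      fun x y h => ?_
    simp only [Prod.mk.injEq, ind_eq_iff] at h ⊢
    rw [Set.biUnion_lt_succ]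
    simp only [Set.mem_union]
    rw [h.1, h.2]

include hinv

/-- Countable unions preserve zero entropy: given a partial union, which has zero entropy, the full
union has entropy rate at most its conditional entropy, and that tends to zero. -/
lemma zeroEnt_ind_iUnion {A : ℕ → Set X} (hA : ∀ i, MeasurableSet (A i))
    (hz : ∀ i, ZeroEnt ρ K U (ind (A i))) : ZeroEnt ρ K U (ind (⋃ i, A i)) := by
  have hm : ∀ n : ℕ, MeasurableSet (⋃ i < n, A i) := fun n =>
    MeasurableSet.iUnion fun i => MeasurableSet.iUnion fun _ => hA i
  have hs : Measurable (ind (⋃ i, A i)) := measurable_ind (MeasurableSet.iUnion hA)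
  have ht : ∀ n : ℕ, Measurable (ind (⋃ i < n, A i)) := fun n => measurable_ind (hm n)
  have hev : ∀ x, ∀ᶠ n : ℕ in atTop, ind (⋃ i < n, A i) x = ind (⋃ i, A i) x := by
    intro x
    by_cases hx : x ∈ ⋃ i, A i
    · obtain ⟨j, hj⟩ := Set.mem_iUnion.1 hx
      filter_upwards [eventually_gt_atTop j] with n hn
      have : x ∈ ⋃ i < n, A i := Set.mem_biUnion (show j ∈ {i | i < n} from hn) hj
      simp only [ind, if_pos this, if_pos hx]
    · refine Eventually.of_forall fun n => ?_
      have : x ∉ ⋃ i < n, A i := fun h => by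
        obtain ⟨i, _, hi⟩ := Set.mem_iUnion₂.1 h
        exact hx (Set.mem_iUnion_of_mem i hi)
      simp only [ind, if_neg this, if_neg hx]
  have hlim := tendsto_mH_itin hU hinv hs
  set L := ⨅ n : ℕ, (1 / (n + 1 : ℝ)) * mH ρ K (itin U (ind (⋃ i, A i)) (n + 1))
  have hL0 : 0 ≤ L := ge_of_tendsto' hlim fun n => div_nonneg (mH_nonneg ρ K _) n.cast_nonneg
  have hle : ∀ n : ℕ, L ≤ mH ρ K (fun x => (ind (⋃ i, A i) x, ind (⋃ i < n, A i) x))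
      - mH ρ K (ind (⋃ i < n, A i)) := by
    intro n
    have h := entropy_le_of_zeroEnt hU hinv hs (ht n)
      (zeroEnt_ind_partial_union hU hA hz n) hlim 0
    have m0 := (measurable_itin hU hs 0).comp hU
    rwa [mH_congr ρ K (m0.prodMk (ht n)) (ht n) (fun x y h => Prod.ext (Subsingleton.elim _ _) h)
        (fun x y h => (Prod.ext_iff.1 h).2),
      mH_congr ρ K (hs.prodMk (m0.prodMk (ht n))) (hs.prodMk (ht n))
        (fun x y h => by
          simp only [Prod.mk.injEq] at h ⊢
          exact ⟨h.1, Subsingleton.elim _ _, h.2⟩)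
        (fun x y h => by
          simp only [Prod.mk.injEq] at h ⊢
          exact ⟨h.1, h.2.2⟩)] at h
  have hto := (tendsto_mH (f := fun (n : ℕ) x => (ind (⋃ i, A i) x, ind (⋃ i < n, A i) x))
    (g := fun x => (ind (⋃ i, A i) x, ind (⋃ i, A i) x)) (fun n => hs.prodMk (ht n))
    (fun x => (hev x).mono fun n hn => by rw [hn]) ρ K).sub (tendsto_mH ht hev ρ K)
  rw [mH_congr ρ K (hs.prodMk hs) hs (fun x y h => Prod.ext h h)
    (fun x y h => (Prod.ext_iff.1 h).1), sub_self] at hto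
  have hL : L = 0 := le_antisymm (ge_of_tendsto' hto hle) hL0
  rw [hL] at hlim
  exact hlim

/-- The measurable sets `s` for which `{s, sᶜ}` has zero fibre-averaged entropy form a
σ-algebra. -/
@[reducible] def zeroSigma : MeasurableSpace X where
  MeasurableSet' s := MeasurableSet s ∧ ZeroEnt ρ K U (ind s)
  measurableSet_empty :=
    ⟨MeasurableSet.empty, zeroEnt_const hU (measurable_ind MeasurableSet.empty) fun x y => by
      simp [ind]⟩
  measurableSet_compl s hs := ⟨hs.1.compl, zeroEnt_ind_compl hU hs.1 hs.2⟩
  measurableSet_iUnion A hA := ⟨MeasurableSet.iUnion fun i => (hA i).1,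
    zeroEnt_ind_iUnion hU hinv (fun i => (hA i).1) fun i => (hA i).2⟩

omit hinv

lemma zeroEnt_of_fibers {f : X → ι} (hf : Measurable f)
    (h : ∀ i, ZeroEnt ρ K U (ind (f ⁻¹' {i}))) : ZeroEnt ρ K U f := by
  classical
  have hs : ∀ i, Measurable (ind (f ⁻¹' {i})) := fun i =>
    measurable_ind (hf (measurableSet_singleton i))
  -- Adjoin the fibres of `f` to the partition one at a time.
  have key : ∀ s : Finset ι,
      ZeroEnt ρ K U (fun x => fun i : ι => if i ∈ s then ind (f ⁻¹' {i}) x else 0) := by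
    intro s
    have hm : ∀ s : Finset ι,
        Measurable (fun x => fun i : ι => if i ∈ s then ind (f ⁻¹' {i}) x else 0) := by
      intro s
      refine measurable_pi_lambda _ fun i => ?_
      by_cases hi : i ∈ s
      · simpa [hi] using hs i
      · simp [hi]
    induction s using Finset.induction_on with
    | empty => exact zeroEnt_const hU (hm _) fun x y => by simp
    | insert a s ha ih =>
      refine (ih.pair hU (h a) (hm s) (hs a)).of_factors hU (hm _) ((hm s).prodMk (hs a))
        fun x y hxy => ?_
      obtain ⟨h1, h2⟩ := Prod.ext_iff.1 hxy
      funext i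
      by_cases hi : i = a
      · subst hi
        simpa using h2
      · simpa [hi] using congrFun h1 i
  refine (key Finset.univ).of_factors hU hf (measurable_pi_lambda _ fun i => by simpa using hs i)
    fun x y hxy => ?_
  have := congrFun hxy (f x)
  simp only [Finset.mem_univ, if_true, ind_eq_iff] at this
  exact (this.1 rfl).symm

end ZeroSigma

/-! ### Disintegrations over factors -/

section Disintegration

open Real ProbabilityTheory

variable {X Ω : Type*} [MeasurableSpace X] [MeasurableSpace Ω]

/-- `K` disintegrates `μ` over the factor map `p : (X, μ) → (Ω, ρ)`. The defining identity
integrates over `B ⊆ Ω`, so it also encodes that almost every `K ω` lives on the fibre over `ω`. -/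
structure Disint (μ : Measure X) (ρ : Measure Ω) (p : X → Ω) (K : Kernel Ω X) : Prop where
  mp : MeasurePreserving p μ ρ
  eq : ∀ A B, MeasurableSet A → MeasurableSet B →
    μ.real (A ∩ p ⁻¹' B) = ∫ ω in B, (K ω).real A ∂ρ

variable {ι κ : Type} [Fintype ι] [Fintype κ]
  [MeasurableSpace ι] [MeasurableSingletonClass ι]
  [MeasurableSpace κ] [MeasurableSingletonClass κ]
  {μ : Measure X} [IsProbabilityMeasure μ]
  {ρ : Measure Ω} [IsProbabilityMeasure ρ] {K : Kernel Ω X} [IsMarkovKernel K]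
  {p : X → Ω}

lemma measurable_kernel_real (K : Kernel Ω X) {A : Set X} (hA : MeasurableSet A) :
    Measurable fun ω => (K ω).real A :=
  (K.measurable_coe hA).ennreal_toReal

lemma integrable_kernel_real (ρ : Measure Ω) [IsProbabilityMeasure ρ] (K : Kernel Ω X)
    [IsMarkovKernel K] {A : Set X} (hA : MeasurableSet A) :
    Integrable (fun ω => (K ω).real A) ρ :=
  Integrable.of_bound (measurable_kernel_real K hA).aestronglyMeasurable 1
    (ae_of_all _ fun ω => by
      rw [Real.norm_eq_abs, abs_of_nonneg measureReal_nonneg]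
      exact measureReal_le_one)

lemma disint_of_lintegral (hp : MeasurePreserving p μ ρ)
    (h : ∀ A B, MeasurableSet A → MeasurableSet B → μ (A ∩ p ⁻¹' B) = ∫⁻ ω in B, K ω A ∂ρ) :
    Disint μ ρ p K := by
  refine ⟨hp, fun A B hA hB => ?_⟩
  rw [Measure.real, h A B hA hB, ← integral_toReal]
  · rfl
  · exact (K.measurable_coe hA).aemeasurable
  · exact ae_of_all _ fun ω => measure_lt_top _ _

/-- A standard Borel space has a disintegration over every factor. -/
lemma disint_condDistrib [StandardBorelSpace X] [Nonempty X] (hp : MeasurePreserving p μ ρ) :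
    Disint μ ρ p (condDistrib id p μ) := by
  refine disint_of_lintegral hp fun A B hA hB => ?_
  have h := compProd_map_condDistrib (mβ := inferInstance) (μ := μ) (X := p) (Y := (id : X → X)) aemeasurable_id
  have h2 := congrArg (fun m => m (B ×ˢ A)) h
  rw [Measure.compProd_apply_prod hB hA, hp.map_eq,
    Measure.map_apply (hp.measurable.prodMk measurable_id) (hB.prod hA)] at h2
  rw [h2]
  congr 1
  ext x
  simp [and_comm]

lemma Disint.integral_real (h : Disint μ ρ p K) {A : Set X} (hA : MeasurableSet A) :
    ∫ ω, (K ω).real A ∂ρ = μ.real A := by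
  have := h.eq A Set.univ hA MeasurableSet.univ
  simpa using this.symm

lemma Disint.condExp_eq (h : Disint μ ρ p K) {A : Set X} (hA : MeasurableSet A) :
    (fun x => (K (p x)).real A) =ᵐ[μ]
      μ[A.indicator (fun _ => (1 : ℝ)) | MeasurableSpace.comap p inferInstance] := by
  have hint : Integrable (fun x => (K (p x)).real A) μ :=
    h.mp.integrable_comp_of_integrable (integrable_kernel_real ρ K hA)
  refine ae_eq_condExp_of_forall_setIntegral_eq h.mp.measurable.comap_le
    ((integrable_const _).indicator hA) (fun s _ _ => hint.integrableOn) ?_ ?_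
  · rintro _ ⟨B, hB, rfl⟩ _
    rw [setIntegral_indicator hA, setIntegral_const, smul_eq_mul, mul_one, Set.inter_comm,
      h.eq A B hA hB, ← h.mp.map_eq, setIntegral_map hB
        (measurable_kernel_real K hA).aestronglyMeasurable h.mp.measurable.aemeasurable]
  · exact ((measurable_kernel_real K hA).comp
      (comap_measurable p)).stronglyMeasurable.aestronglyMeasurable

lemma Disint.condH_eq (h : Disint μ ρ p K) {f : X → ι} (hf : Measurable f) :
    condH μ (fun i => f ⁻¹' {i}) (MeasurableSpace.comap p inferInstance) = mH ρ K f := by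
  unfold condH mH fH
  rw [integral_finsetSum]
  · refine Finset.sum_congr rfl fun i _ => ?_
    have hA := hf (measurableSet_singleton i)
    have e : ∫ x, negMulLog ((μ[(f ⁻¹' {i}).indicator (fun _ => (1 : ℝ)) |
        MeasurableSpace.comap p inferInstance]) x) ∂μ
        = ∫ x, negMulLog ((K (p x)).real (f ⁻¹' {i})) ∂μ := by
      refine integral_congr_ae ?_
      filter_upwards [h.condExp_eq hA] with x hx
      rw [← hx]
    rw [e, ← h.mp.map_eq, integral_map h.mp.measurable.aemeasurable]
    exact (continuous_negMulLog.measurable.comp (measurable_kernel_real K hA)).aestronglyMeasurable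
  · intro i _
    have hA := hf (measurableSet_singleton i)
    refine Integrable.of_bound
      (continuous_negMulLog.measurable.comp (measurable_kernel_real K hA)).aestronglyMeasurable 1
      (ae_of_all _ fun ω => ?_)
    rw [Real.norm_eq_abs, abs_of_nonneg (negMulLog_nonneg measureReal_nonneg measureReal_le_one)]
    exact negMulLog_le_one measureReal_nonneg

/-- The entropy of a partition relative to a factor, through the fibre measures. -/
lemma Disint.hPartCond_eq (h : Disint μ ρ p K) {k : ℕ} {U : X → X} (hU : Measurable U)
    {f : X → Fin k} (hf : Measurable f) {α : Fin k → Set X} (hα : ∀ i, α i = f ⁻¹' {i}) :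
    hPartCond μ U α (MeasurableSpace.comap p inferInstance)
      = ⨅ n : ℕ, (1 / (n + 1 : ℝ)) * mH ρ K (itin U f (n + 1)) := by
  unfold hPartCond
  refine iInf_congr fun n => ?_
  rw [← h.condH_eq (measurable_itin hU hf (n + 1))]
  congr 2
  funext s
  ext x
  simp [joinAtoms, hα, itin, funext_iff]

/-- Equivariance of a disintegration over an invertible factor, in terms of entropy: almost surely
`K ω` is carried by `T` to `K (S ω)`, and `S` preserves `ρ`. -/
lemma Disint.entInv (h : Disint μ ρ p K) {T : X → X} {S : Ω → Ω} (hT : MeasurePreserving T μ μ)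
    (hS : MeasurePreserving S ρ ρ) (hSe : MeasurableEmbedding S)
    (hpT : p ∘ T = S ∘ p) : EntInv ρ K T := by
  have key : ∀ A, MeasurableSet A →
      (fun ω => (K ω).real (T ⁻¹' A)) =ᵐ[ρ] fun ω => (K (S ω)).real A := by
    intro A hA
    refine Integrable.ae_eq_of_forall_setIntegral_eq _ _
      (integrable_kernel_real ρ K (hT.measurable hA))
      (hS.integrable_comp_of_integrable (integrable_kernel_real ρ K hA)) fun B hB _ => ?_
    obtain ⟨B', hB', rfl⟩ : ∃ B', MeasurableSet B' ∧ S ⁻¹' B' = B :=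
      ⟨S '' B, hSe.measurableSet_image.2 hB, Set.preimage_image_eq _ hSe.injective⟩
    rw [← h.eq _ _ (hT.measurable hA) hB,
      hS.setIntegral_preimage_emb hSe (fun ω => (K ω).real A), ← h.eq _ _ hA hB',
      ← Set.preimage_comp, ← hpT, Set.preimage_comp, ← Set.preimage_inter]
    exact hT.measureReal_preimage (hA.inter (h.mp.measurable hB')).nullMeasurableSet
  intro ι _ _ _ f hf
  have e : mH ρ K (f ∘ T) = ∫ ω, fH (K (S ω)) f ∂ρ := by
    refine integral_congr_ae ?_
    have := ae_all_iff.2 fun i => key _ (hf (measurableSet_singleton i))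
    filter_upwards [this] with ω hω
    unfold fH
    exact Finset.sum_congr rfl fun i _ => by rw [Set.preimage_comp, hω i]
  rw [e]
  exact hS.integral_comp hSe (fun ω => fH (K ω) f)

lemma Disint.mH_congr_ae (h : Disint μ ρ p K) {f g : X → ι} (hfg : f =ᵐ[μ] g) :
    mH ρ K f = mH ρ K g := by
  obtain ⟨N, hN, hNm, hN0⟩ := exists_measurable_superset_of_null (ae_iff.1 hfg)
  have h0 : ∫ ω, (K ω).real N ∂ρ = 0 := by
    rw [h.integral_real hNm, Measure.real, hN0, ENNReal.toReal_zero]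
  rw [integral_eq_zero_iff_of_nonneg (fun _ => measureReal_nonneg)
    (integrable_kernel_real ρ K hNm)] at h0
  refine integral_congr_ae ?_
  filter_upwards [h0] with ω hω
  have hω' : K ω N = 0 := (measureReal_eq_zero_iff).1 hω
  have hae : f =ᵐ[K ω] g := ae_iff.2 (measure_mono_null hN hω')
  unfold fH
  refine Finset.sum_congr rfl fun i _ => ?_
  congr 1
  refine measureReal_congr ?_
  filter_upwards [hae] with x hx
  change (f x = i) = (g x = i)
  rw [hx]

lemma Disint.zeroEnt_congr (h : Disint μ ρ p K) {T : X → X} (hT : MeasurePreserving T μ μ)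
    {f g : X → ι} (hfg : f =ᵐ[μ] g) (hg : ZeroEnt ρ K T g) : ZeroEnt ρ K T f := by
  have : ∀ n, mH ρ K (itin T f n) = mH ρ K (itin T g n) := by
    intro n
    refine h.mH_congr_ae ?_
    have := ae_all_iff.2 fun i : ℕ =>
      (hT.iterate i).quasiMeasurePreserving.ae hfg
    filter_upwards [this] with x hx
    exact funext fun i => hx i
  simpa only [ZeroEnt, this] using hg

lemma ind_ae_eq {s t : Set X} (h : μ ((s \ t) ∪ (t \ s)) = 0) : ind s =ᵐ[μ] ind t := by
  refine ae_iff.2 (measure_mono_null (fun x hx => ?_) h)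
  by_contra hn
  refine hx ?_
  have : x ∈ s ↔ x ∈ t := by
    constructor
    · intro h1
      by_contra h2
      exact hn (Or.inl ⟨h1, h2⟩)
    · intro h1
      by_contra h2
      exact hn (Or.inr ⟨h1, h2⟩)
  change ind s x = ind t x
  by_cases h2 : x ∈ t
  · simp [ind, h2, this.2 h2]
  · simp [ind, h2, mt this.1 h2]

/-- Sets pulled back from the factor have zero entropy relative to it. -/
lemma Disint.zeroEnt_preimage (h : Disint μ ρ p K) {T : X → X} (hT : Measurable T)
    (hinv : EntInv ρ K T) {B : Set Ω} (hB : MeasurableSet B) :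
    ZeroEnt ρ K T (ind (p ⁻¹' B)) := by
  have hm := measurable_ind (h.mp.measurable hB)
  have key : ∀ C, MeasurableSet C → (fun ω => (K ω).real (p ⁻¹' C)) =ᵐ[ρ]
      C.indicator (fun _ => (1 : ℝ)) := by
    intro C hC
    refine Integrable.ae_eq_of_forall_setIntegral_eq _ _
      (integrable_kernel_real ρ K (h.mp.measurable hC)) ((integrable_const _).indicator hC)
      fun D hD _ => ?_
    rw [← h.eq _ _ (h.mp.measurable hC) hD, setIntegral_indicator hC, setIntegral_const,
      smul_eq_mul, mul_one, ← Set.preimage_inter, Set.inter_comm,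
      h.mp.measureReal_preimage (hD.inter hC).nullMeasurableSet]
  have h0 : mH ρ K (ind (p ⁻¹' B)) = 0 := by
    unfold mH
    rw [← integral_zero Ω ℝ (μ := ρ)]
    refine integral_congr_ae ?_
    filter_upwards [key B hB, key Bᶜ hB.compl] with ω h1 h2
    unfold fH
    rw [Fin.sum_univ_two, ind_preimage_zero, ind_preimage_one, ← Set.preimage_compl, h1, h2]
    by_cases hω : ω ∈ B <;> simp [hω]
  have hle : ∀ n, mH ρ K (itin T (ind (p ⁻¹' B)) n) ≤ 0 := by
    intro n
    induction n with
    | zero => exact (mH_const ρ K (measurable_itin hT hm 0) fun x y => Subsingleton.elim _ _).le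
    | succ n ih =>
      refine (subadditive_mH_itin hT hinv hm n 1).trans ?_
      have : mH ρ K (itin T (ind (p ⁻¹' B)) 1) ≤ mH ρ K (ind (p ⁻¹' B)) :=
        mH_mono ρ K (measurable_itin hT hm 1) hm fun x y hxy => by
          rw [itin_eq_iff]
          intro i hi
          obtain rfl : i = 0 := by omega
          exact hxy
      linarith
  have he : ∀ n, mH ρ K (itin T (ind (p ⁻¹' B)) n) = 0 := fun n =>
    le_antisymm (hle n) (mH_nonneg ρ K _)
  simp [ZeroEnt, he]

end Disintegration

/-! ### Finite approximation of the conditioning -/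

section Approximation

open Real ProbabilityTheory

variable {X Y Z : Type*} [MeasurableSpace X] [MeasurableSpace Y] [MeasurableSpace Z]
  {μ : Measure X} [IsProbabilityMeasure μ] {ν : Measure Y} [IsProbabilityMeasure ν]
  {lam : Measure Z} [IsProbabilityMeasure lam]
  {π₀ : X → Z} {π₁ : X → Y}
  {Ky : Kernel Y X} [IsMarkovKernel Ky] {Kz : Kernel Z X} [IsMarkovKernel Kz]

/-- If the `Ky`-probability of `A` is within `δ` of the constant `c` on `D`, then so is the
`Kz`-probability of `A` conditioned on `π₁⁻¹ D`. This needs `Y` to be an extension of `Z` modulo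
null sets, which is what `hCP` says. -/
lemma fibre_compare (hY : Disint μ ν π₁ Ky) (hZ : Disint μ lam π₀ Kz)
    (hCP : ∀ B, MeasurableSet B → ∃ F, MeasurableSet F ∧
      μ ((π₀ ⁻¹' B \ π₁ ⁻¹' F) ∪ (π₁ ⁻¹' F \ π₀ ⁻¹' B)) = 0)
    {A : Set X} (hA : MeasurableSet A) {D : Set Y} (hD : MeasurableSet D) {c δ : ℝ}
    (h : ∀ y ∈ D, |(Ky y).real A - c| ≤ δ) :
    ∀ᵐ z ∂lam, |(Kz z).real (A ∩ π₁ ⁻¹' D) - c * (Kz z).real (π₁ ⁻¹' D)|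
      ≤ δ * (Kz z).real (π₁ ⁻¹' D) := by
  have hD' := hY.mp.measurable hD
  have key : ∀ A', MeasurableSet A' → ∀ B F, MeasurableSet B → MeasurableSet F →
      μ ((π₀ ⁻¹' B \ π₁ ⁻¹' F) ∪ (π₁ ⁻¹' F \ π₀ ⁻¹' B)) = 0 →
      ∫ z in B, (Kz z).real (A' ∩ π₁ ⁻¹' D) ∂lam = ∫ y in D ∩ F, (Ky y).real A' ∂ν := by
    intro A' hA' B F hB hF h0
    rw [← hZ.eq _ _ (hA'.inter hD') hB, ← hY.eq _ _ hA' (hD.inter hF), Set.preimage_inter,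
      ← Set.inter_assoc]
    have hae : (π₀ ⁻¹' B : Set X) =ᵐ[μ] (π₁ ⁻¹' F : Set X) := by
      rw [← measure_symmDiff_eq_zero_iff]
      exact h0
    exact measureReal_congr ((ae_eq_refl _).inter hae)
  have iA := integrable_kernel_real lam Kz (hA.inter hD')
  have iD := integrable_kernel_real lam Kz hD'
  have cmp : ∀ B, MeasurableSet B →
      ∫ z in B, (Kz z).real (A ∩ π₁ ⁻¹' D) ∂lam ≤ ∫ z in B, (c + δ) * (Kz z).real (π₁ ⁻¹' D) ∂lam ∧
      ∫ z in B, (c - δ) * (Kz z).real (π₁ ⁻¹' D) ∂lam ≤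
        ∫ z in B, (Kz z).real (A ∩ π₁ ⁻¹' D) ∂lam := by
    intro B hB
    obtain ⟨F, hF, h0⟩ := hCP B hB
    have k1 := key A hA B F hB hF h0
    have k2 := key Set.univ MeasurableSet.univ B F hB hF h0
    simp only [Set.univ_inter] at k2
    rw [integral_const_mul, integral_const_mul, k1, k2, ← integral_const_mul, ← integral_const_mul]
    have i1 := integrable_kernel_real ν Ky hA
    have i2 := integrable_kernel_real ν Ky (MeasurableSet.univ (α := X))
    constructor
    · refine setIntegral_mono_on i1.integrableOn (i2.const_mul _).integrableOn (hD.inter hF)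
        fun y hy => ?_
      have := abs_le.1 (h y hy.1)
      rw [probReal_univ]
      linarith
    · refine setIntegral_mono_on (i2.const_mul _).integrableOn i1.integrableOn (hD.inter hF)
        fun y hy => ?_
      have := abs_le.1 (h y hy.1)
      rw [probReal_univ]
      linarith
  have u := ae_le_of_forall_setIntegral_le iA (iD.const_mul (c + δ)) fun B hB _ => (cmp B hB).1
  have l := ae_le_of_forall_setIntegral_le (iD.const_mul (c - δ)) iA fun B hB _ => (cmp B hB).2
  filter_upwards [u, l] with z hu hl
  rw [abs_le]
  constructor <;> linarith

/-- If, up to `δ`, the `Ky`-distribution of `f` depends only on `d y`, then the entropy of `f` over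
`Y` is close to its entropy over `Z` conditioned on the finite partition `d ∘ π₁`. -/
lemma mH_compare {ι J : Type} [Fintype ι] [Fintype J]
    [MeasurableSpace ι] [MeasurableSingletonClass ι]
    [MeasurableSpace J] [MeasurableSingletonClass J]
    (hY : Disint μ ν π₁ Ky) (hZ : Disint μ lam π₀ Kz)
    (hCP : ∀ B, MeasurableSet B → ∃ F, MeasurableSet F ∧
      μ ((π₀ ⁻¹' B \ π₁ ⁻¹' F) ∪ (π₁ ⁻¹' F \ π₀ ⁻¹' B)) = 0)
    {f : X → ι} (hf : Measurable f) {d : Y → J} (hd : Measurable d) (c : ι → J → ℝ)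
    (hc0 : ∀ i j, 0 ≤ c i j) (hc1 : ∀ i j, c i j ≤ 1) {δ ε : ℝ}
    (hmod : ∀ p q : ℝ, 0 ≤ p → p ≤ 1 → 0 ≤ q → q ≤ 1 → |p - q| ≤ δ →
      |negMulLog p - negMulLog q| ≤ ε)
    (hc : ∀ y i, |(Ky y).real (f ⁻¹' {i}) - c i (d y)| ≤ δ) :
    |mH ν Ky f - (mH lam Kz (fun x => (f x, d (π₁ x))) - mH lam Kz (fun x => d (π₁ x)))|
      ≤ 2 * (Fintype.card ι * ε) := by
  set w : J → ℝ := fun j => ∑ i, negMulLog (c i j) with hw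
  have hfi : ∀ i, MeasurableSet (f ⁻¹' {i}) := fun i => hf (measurableSet_singleton i)
  have hdj : ∀ j, MeasurableSet (d ⁻¹' {j}) := fun j => hd (measurableSet_singleton j)
  have hγ : Measurable fun x => d (π₁ x) := hd.comp hY.mp.measurable
  have hwd : Integrable (fun y => w (d y)) ν :=
    (Integrable.of_finite (μ := ν.map d) (f := w)).comp_measurable hd
  -- both entropies are compared with the integral of `w ∘ d`
  have h1 : |mH ν Ky f - ∫ y, w (d y) ∂ν| ≤ Fintype.card ι * ε := by
    unfold mH
    rw [← integral_sub (integrable_fH ν Ky hf) hwd]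
    have := norm_integral_le_of_norm_le_const (μ := ν) (C := Fintype.card ι * ε)
      (f := fun y => fH (Ky y) f - w (d y)) (ae_of_all _ fun y => ?_)
    · simpa using this
    · rw [Real.norm_eq_abs]
      simp only [fH, hw]
      rw [← Finset.sum_sub_distrib]
      refine (Finset.abs_sum_le_sum_abs _ _).trans ?_
      refine (Finset.sum_le_sum fun i _ => hmod _ _ measureReal_nonneg measureReal_le_one
        (hc0 _ _) (hc1 _ _) (hc y i)).trans ?_
      simp
  have h2 : ∫ z, ∑ j, (Kz z).real (π₁ ⁻¹' (d ⁻¹' {j})) * w j ∂lam = ∫ y, w (d y) ∂ν := by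
    rw [integral_finsetSum _ fun j _ =>
      (integrable_kernel_real lam Kz (hY.mp.measurable (hdj j))).mul_const _,
      ← integral_map (f := w) hd.aemeasurable (measurable_of_finite w).aestronglyMeasurable,
      integral_fintype Integrable.of_finite]
    refine Finset.sum_congr rfl fun j _ => ?_
    rw [integral_mul_const, hZ.integral_real (hY.mp.measurable (hdj j)),
      hY.mp.measureReal_preimage (hdj j).nullMeasurableSet, measureReal_def (ν.map d),
      Measure.map_apply hd (measurableSet_singleton j), ← measureReal_def, smul_eq_mul]
  have h3 : |(mH lam Kz (fun x => (f x, d (π₁ x))) - mH lam Kz (fun x => d (π₁ x)))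
      - ∫ y, w (d y) ∂ν| ≤ Fintype.card ι * ε := by
    unfold mH
    have ir : Integrable (fun z => ∑ j, (Kz z).real (π₁ ⁻¹' (d ⁻¹' {j})) * w j) lam :=
      integrable_finsetSum _ fun j _ =>
        (integrable_kernel_real lam Kz (hY.mp.measurable (hdj j))).mul_const _
    rw [← h2, ← integral_sub (integrable_fH lam Kz (hf.prodMk hγ)) (integrable_fH lam Kz hγ),
      ← integral_sub (f := fun z => fH (Kz z) (fun x => (f x, d (π₁ x)))
          - fH (Kz z) (fun x => d (π₁ x)))
        ((integrable_fH lam Kz (hf.prodMk hγ)).sub (integrable_fH lam Kz hγ)) ir]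
    have hall : ∀ᵐ z ∂lam, ∀ i j, |(Kz z).real (f ⁻¹' {i} ∩ π₁ ⁻¹' (d ⁻¹' {j}))
        - c i j * (Kz z).real (π₁ ⁻¹' (d ⁻¹' {j}))| ≤ δ * (Kz z).real (π₁ ⁻¹' (d ⁻¹' {j})) :=
      ae_all_iff.2 fun i => ae_all_iff.2 fun j =>
        fibre_compare hY hZ hCP (hfi i) (hdj j) fun y hy => by
          have := hc y i
          rwa [show d y = j from hy] at this
    have := norm_integral_le_of_norm_le_const (μ := lam) (C := Fintype.card ι * ε)
      (f := fun z => fH (Kz z) (fun x => (f x, d (π₁ x))) - fH (Kz z) (fun x => d (π₁ x))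
        - ∑ j, (Kz z).real (π₁ ⁻¹' (d ⁻¹' {j})) * w j) ?_
    · simpa using this
    filter_upwards [hall] with z hz
    set r : J → ℝ := fun j => (Kz z).real (π₁ ⁻¹' (d ⁻¹' {j})) with hr
    set p : ι → J → ℝ := fun i j => (Kz z).real (f ⁻¹' {i} ∩ π₁ ⁻¹' (d ⁻¹' {j})) with hp
    have hr1 : ∑ j, r j = 1 := by
      have := measureReal_sum_fiber (Kz z) hγ Set.univ MeasurableSet.univ
      simp only [Set.univ_inter, probReal_univ] at this
      exact this
    have hpr : ∀ j, ∑ i, p i j = r j := fun j => by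
      have := measureReal_sum_fiber (Kz z) hf _ (hY.mp.measurable (hdj j))
      simp_rw [Set.inter_comm _ (f ⁻¹' _)] at this
      exact this
    have hp0 : ∀ i j, 0 ≤ p i j := fun _ _ => measureReal_nonneg
    have hr0 : ∀ j, 0 ≤ r j := fun _ => measureReal_nonneg
    have hple : ∀ i j, p i j ≤ r j := fun i j => measureReal_mono Set.inter_subset_right
    have e1 : fH (Kz z) (fun x => (f x, d (π₁ x))) - fH (Kz z) (fun x => d (π₁ x))
        = ∑ j, ∑ i, r j * negMulLog (p i j / r j) := by
      simp_rw [fun j => sum_mul_negMulLog_div (fun i => p i j) (fun i => hp0 i j) (hpr j)]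
      rw [Finset.sum_sub_distrib, fH_pair, Finset.sum_comm]
      rfl
    rw [Real.norm_eq_abs, e1, ← Finset.sum_sub_distrib]
    have hj : ∀ j, |∑ i, r j * negMulLog (p i j / r j) - r j * w j|
        ≤ r j * (Fintype.card ι * ε) := by
      intro j
      rw [← Finset.mul_sum, ← mul_sub, abs_mul, abs_of_nonneg (hr0 j)]
      rcases (hr0 j).eq_or_lt with h0 | h0
      · simp [← h0]
      · refine mul_le_mul_of_nonneg_left ?_ h0.le
        simp only [hw]
        rw [← Finset.sum_sub_distrib]
        refine (Finset.abs_sum_le_sum_abs _ _).trans ?_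
        refine (Finset.sum_le_sum fun i _ => hmod _ _ (div_nonneg (hp0 i j) h0.le)
          (div_le_one_of_le₀ (hple i j) h0.le) (hc0 i j) (hc1 i j) ?_).trans ?_
        · have := hz i j
          have e : p i j / r j - c i j = (p i j - c i j * r j) / r j := by field_simp
          rw [e, abs_div, abs_of_pos h0, div_le_iff₀ h0]
          exact this
        · simp
    refine (Finset.abs_sum_le_sum_abs _ _).trans ((Finset.sum_le_sum fun j _ => hj j).trans ?_)
    rw [← Finset.sum_mul, hr1, one_mul]
  rw [abs_le] at h1 h3 ⊢
  constructor <;> linarith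

/-- Measurable rounding of `[0, 1]` to the grid `{0, 1/M, …, 1}`. -/
lemma exists_quantize (M : ℕ) (hM : 1 ≤ M) : ∃ q : ℝ → Fin (M + 1), Measurable q ∧
    ∀ x, 0 ≤ x → x ≤ 1 → |x - (q x : ℝ) / M| ≤ 1 / M := by
  have hM0 : (0 : ℝ) < M := by exact_mod_cast hM
  refine ⟨fun x => ⟨min ⌊x * M⌋₊ M, by omega⟩, ?_, fun x h0 h1 => ?_⟩
  · exact (measurable_of_countable fun n : ℕ => (⟨min n M, by omega⟩ : Fin (M + 1))).comp
      (Nat.measurable_floor.comp (measurable_id.mul_const _))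
  · have hle : ⌊x * M⌋₊ ≤ M := by
      refine Nat.floor_le_of_le ?_
      exact mul_le_of_le_one_left hM0.le h1
    have a := Nat.floor_le (mul_nonneg h0 hM0.le)
    have b := Nat.lt_floor_add_one (x * M)
    simp only [min_eq_left hle]
    have e : x - (⌊x * M⌋₊ : ℝ) / M = (x * M - ⌊x * M⌋₊) / M := by field_simp
    rw [e, abs_div, abs_of_pos hM0]
    gcongr
    rw [abs_le]
    constructor <;> linarith

/-- Conditional entropies over `Y` are approximated by conditional entropies over `Z` in which one
also conditions on a finite partition pulled back from `Y`. -/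
lemma exists_approx {ι κ : Type} [Fintype ι] [Fintype κ]
    [MeasurableSpace ι] [MeasurableSingletonClass ι]
    [MeasurableSpace κ] [MeasurableSingletonClass κ]
    (hY : Disint μ ν π₁ Ky) (hZ : Disint μ lam π₀ Kz)
    (hCP : ∀ B, MeasurableSet B → ∃ F, MeasurableSet F ∧
      μ ((π₀ ⁻¹' B \ π₁ ⁻¹' F) ∪ (π₁ ⁻¹' F \ π₀ ⁻¹' B)) = 0)
    {f : X → ι} (hf : Measurable f) {g : X → κ} (hg : Measurable g) {ε : ℝ} (hε : 0 < ε) :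
    ∃ (J : Type) (_ : Fintype J) (_ : MeasurableSpace J) (_ : MeasurableSingletonClass J)
      (d : Y → J), Measurable d ∧
      |(mH ν Ky (fun x => (f x, g x)) - mH ν Ky g)
        - (mH lam Kz (fun x => (f x, g x, d (π₁ x))) - mH lam Kz (fun x => (g x, d (π₁ x))))|
        ≤ ε := by
  set C : ℝ := 2 * Fintype.card (ι × κ) + 2 * Fintype.card κ + 1 with hC
  have hC0 : 0 < C := by positivity
  obtain ⟨δ, hδ, hmod⟩ := Metric.uniformContinuousOn_iff_le.1
    (isCompact_Icc.uniformContinuousOn_of_continuous (s := Set.Icc (0 : ℝ) 1)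
      continuous_negMulLog.continuousOn) (ε / C) (div_pos hε hC0)
  have hmod' : ∀ p q : ℝ, 0 ≤ p → p ≤ 1 → 0 ≤ q → q ≤ 1 → |p - q| ≤ δ →
      |negMulLog p - negMulLog q| ≤ ε / C := fun p q h1 h2 h3 h4 h5 =>
    hmod p ⟨h1, h2⟩ q ⟨h3, h4⟩ h5
  obtain ⟨M, hM⟩ := exists_nat_one_div_lt hδ
  obtain ⟨q, hqm, hq⟩ := exists_quantize (M + 1) (by omega)
  have hq' : ∀ x : ℝ, 0 ≤ x → x ≤ 1 → |x - (q x : ℝ) / (M + 1 : ℕ)| ≤ δ := fun x h0 h1 => by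
    refine (hq x h0 h1).trans ?_
    push_cast
    exact hM.le
  have hfg : Measurable fun x => (f x, g x) := hf.prodMk hg
  have hq01 : ∀ a : Fin (M + 1 + 1), 0 ≤ (a : ℝ) / (M + 1 : ℕ) ∧ (a : ℝ) / (M + 1 : ℕ) ≤ 1 := by
    intro a
    refine ⟨by positivity, div_le_one_of_le₀ ?_ (by positivity)⟩
    exact_mod_cast Nat.lt_succ_iff.1 a.2
  -- `d y` records the `Ky y`-distributions of `(f, g)` and of `g` up to `1 / (M + 1)`
  let d : Y → (ι × κ → Fin (M + 1 + 1)) × (κ → Fin (M + 1 + 1)) := fun y =>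
    (fun i => q ((Ky y).real ((fun x => (f x, g x)) ⁻¹' {i})), fun j => q ((Ky y).real (g ⁻¹' {j})))
  have hd : Measurable d := by
    refine Measurable.prodMk (measurable_pi_lambda _ fun i => ?_) (measurable_pi_lambda _ fun j => ?_)
    · exact hqm.comp (measurable_kernel_real Ky (hfg (measurableSet_singleton i)))
    · exact hqm.comp (measurable_kernel_real Ky (hg (measurableSet_singleton j)))
  classical
  refine ⟨_, inferInstance, inferInstance, inferInstance, d, hd, ?_⟩
  have h1 := mH_compare hY hZ hCP hfg hd (fun i a => (a.1 i : ℝ) / (M + 1 : ℕ))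
    (fun i a => (hq01 _).1) (fun i a => (hq01 _).2) hmod'
    fun y i => hq' _ measureReal_nonneg measureReal_le_one
  have h2 := mH_compare hY hZ hCP hg hd (fun j a => (a.2 j : ℝ) / (M + 1 : ℕ))
    (fun i a => (hq01 _).1) (fun i a => (hq01 _).2) hmod'
    fun y i => hq' _ measureReal_nonneg measureReal_le_one
  have hγ : Measurable fun x => d (π₁ x) := hd.comp hY.mp.measurable
  have h3 : mH lam Kz (fun x => ((f x, g x), d (π₁ x))) = mH lam Kz (fun x => (f x, g x, d (π₁ x))) :=
    mH_congr lam Kz (hfg.prodMk hγ) (hf.prodMk (hg.prodMk hγ))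
      (fun x y h => by
        simp only [Prod.mk.injEq] at h ⊢
        tauto)
      (fun x y h => by
        simp only [Prod.mk.injEq] at h ⊢
        tauto)
  rw [h3] at h1
  have hsum : 2 * (Fintype.card (ι × κ) * (ε / C)) + 2 * (Fintype.card κ * (ε / C)) ≤ ε := by
    have e : 2 * (Fintype.card (ι × κ) * (ε / C)) + 2 * (Fintype.card κ * (ε / C))
        = (C - 1) * (ε / C) := by rw [hC]; ring
    have e2 : (C - 1) * (ε / C) = ε - ε / C := by field_simp
    rw [e, e2]
    linarith [div_pos hε hC0]
  rw [abs_le] at h1 h2 ⊢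
  constructor <;> linarith

end Approximation

/-! ### Conditioning on a finite partition -/

section FiniteCond

open Real

variable {X : Type*} [MeasurableSpace X]
variable {ι κ : Type} [Fintype ι] [Fintype κ]
  [MeasurableSpace ι] [MeasurableSingletonClass ι]
  [MeasurableSpace κ] [MeasurableSingletonClass κ]

/-- Conditional expectation of an indicator given a finite partition. -/
lemma condExp_finite (m : Measure X) [IsProbabilityMeasure m] {g : X → κ} (hg : Measurable g)
    {A : Set X} (hA : MeasurableSet A) :
    (fun x => m.real (A ∩ g ⁻¹' {g x}) / m.real (g ⁻¹' {g x})) =ᵐ[m]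
      m[A.indicator (fun _ => (1 : ℝ)) | MeasurableSpace.comap g inferInstance] := by
  classical
  have hφ : ∀ φ : κ → ℝ, Measurable φ := fun φ => measurable_of_finite φ
  set φ : κ → ℝ := fun j => m.real (A ∩ g ⁻¹' {j}) / m.real (g ⁻¹' {j}) with hφd
  have hint : Integrable (fun x => φ (g x)) m := by
    refine Integrable.of_bound ((hφ φ).comp hg).aestronglyMeasurable 1 (ae_of_all _ fun x => ?_)
    rw [Real.norm_eq_abs, abs_of_nonneg (div_nonneg measureReal_nonneg measureReal_nonneg)]
    exact div_le_one_of_le₀ (measureReal_mono Set.inter_subset_right) measureReal_nonneg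
  refine ae_eq_condExp_of_forall_setIntegral_eq hg.comap_le
    ((integrable_const _).indicator hA) (fun s _ _ => hint.integrableOn) ?_ ?_
  · rintro _ ⟨B, hB, rfl⟩ _
    rw [setIntegral_indicator hA, setIntegral_const, smul_eq_mul, mul_one]
    have h1 : ∫ x in g ⁻¹' B, φ (g x) ∂m = ∑ j, if j ∈ B then m.real (A ∩ g ⁻¹' {j}) else 0 := by
      rw [← integral_indicator (hg hB)]
      have e : (g ⁻¹' B).indicator (fun x => φ (g x)) = fun x => B.indicator φ (g x) := by
        ext x
        simp [Set.indicator]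
      rw [e, ← integral_map (f := B.indicator φ) hg.aemeasurable (hφ _).aestronglyMeasurable,
        integral_fintype]
      · refine Finset.sum_congr rfl fun j _ => ?_
        rw [measureReal_def, Measure.map_apply hg (measurableSet_singleton j), ← measureReal_def]
        by_cases hj : j ∈ B
        · simp only [Set.indicator_of_mem hj, smul_eq_mul, if_pos hj, hφd]
          by_cases h0 : m.real (g ⁻¹' {j}) = 0
          · have : m.real (A ∩ g ⁻¹' {j}) = 0 :=
              le_antisymm (h0 ▸ measureReal_mono Set.inter_subset_right) measureReal_nonneg
            simp [h0, this]
          · field_simp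
        · simp [hj]
      · exact Integrable.of_finite
    have h2 : m.real (g ⁻¹' B ∩ A) = ∑ j, if j ∈ B then m.real (A ∩ g ⁻¹' {j}) else 0 := by
      rw [← measureReal_sum_fiber m hg _ ((hg hB).inter hA)]
      refine Finset.sum_congr rfl fun j _ => ?_
      by_cases hj : j ∈ B
      · rw [if_pos hj]
        congr 1
        ext x
        simp only [Set.mem_inter_iff, Set.mem_preimage, Set.mem_singleton_iff]
        constructor
        · exact fun h => ⟨h.1.2, h.2⟩
        · exact fun h => ⟨⟨h.2 ▸ hj, h.1⟩, h.2⟩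
      · rw [if_neg hj]
        have : g ⁻¹' B ∩ A ∩ g ⁻¹' {j} = ∅ := by
          ext x
          simp only [Set.mem_inter_iff, Set.mem_preimage, Set.mem_singleton_iff,
            Set.mem_empty_iff_false, iff_false]
          exact fun h => hj (h.2 ▸ h.1.1)
        simp [this]
    exact h1.trans h2.symm
  · exact ((hφ φ).comp (comap_measurable g)).stronglyMeasurable.aestronglyMeasurable

/-- Conditional entropy given a finite partition is a difference of Shannon entropies. -/
lemma condH_finite (m : Measure X) [IsProbabilityMeasure m] {f : X → ι} {g : X → κ}
    (hf : Measurable f) (hg : Measurable g) :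
    condH m (fun i => f ⁻¹' {i}) (MeasurableSpace.comap g inferInstance)
      = fH m (fun x => (f x, g x)) - fH m g := by
  classical
  have hA : ∀ i, MeasurableSet (f ⁻¹' {i}) := fun i => hf (measurableSet_singleton i)
  have e1 : ∀ i, ∫ x, negMulLog ((m[(f ⁻¹' {i}).indicator (fun _ => (1 : ℝ)) |
        MeasurableSpace.comap g inferInstance]) x) ∂m
      = ∑ j, m.real (g ⁻¹' {j}) *
          negMulLog (m.real (f ⁻¹' {i} ∩ g ⁻¹' {j}) / m.real (g ⁻¹' {j})) := by
    intro i
    set φ : κ → ℝ := fun j =>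
      negMulLog (m.real (f ⁻¹' {i} ∩ g ⁻¹' {j}) / m.real (g ⁻¹' {j})) with hφ
    have : ∫ x, negMulLog ((m[(f ⁻¹' {i}).indicator (fun _ => (1 : ℝ)) |
        MeasurableSpace.comap g inferInstance]) x) ∂m = ∫ x, φ (g x) ∂m := by
      refine integral_congr_ae ?_
      filter_upwards [condExp_finite m hg (hA i)] with x hx
      rw [← hx]
    rw [this, ← integral_map (f := φ) hg.aemeasurable
      (measurable_of_finite φ).aestronglyMeasurable, integral_fintype]
    · refine Finset.sum_congr rfl fun j _ => ?_
      rw [measureReal_def, Measure.map_apply hg (measurableSet_singleton j), ← measureReal_def,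
        smul_eq_mul]
    · exact Integrable.of_finite
  unfold condH
  simp_rw [e1]
  rw [fH_pair, Finset.sum_comm, Finset.sum_comm (s := (Finset.univ : Finset ι))]
  unfold fH
  rw [← Finset.sum_sub_distrib]
  refine Finset.sum_congr rfl fun j _ => ?_
  set r := m.real (g ⁻¹' {j}) with hr
  have hs : ∑ i, m.real (f ⁻¹' {i} ∩ g ⁻¹' {j}) = r := by
    simp_rw [Set.inter_comm _ (g ⁻¹' {j})]
    exact measureReal_sum_fiber m hf _ (hg (measurableSet_singleton j))
  exact (sum_mul_negMulLog_div (fun i => m.real (f ⁻¹' {i} ∩ g ⁻¹' {j}))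
    (fun i => measureReal_nonneg) hs)

end FiniteCond

/-- Future partitions as maps: `⋁_{i=1}^n T^{-iℓ} α` is generated by `n`-names along `T^ℓ`. -/
lemma tailJoinSigma_eq {X : Type*} (T : X → X) {k : ℕ} {α : Fin k → Set X} {f : X → Fin k}
    (hα : ∀ i, α i = f ⁻¹' {i}) (ℓ n : ℕ) :
    tailJoinSigma T α ℓ n =
      MeasurableSpace.comap (itin (T^[ℓ]) f n ∘ T^[ℓ]) inferInstance := by
  have hset : ∀ s : Fin n → Fin k, (⋂ i : Fin n, (T^[((i : ℕ) + 1) * ℓ]) ⁻¹' α (s i))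
      = (itin (T^[ℓ]) f n ∘ T^[ℓ]) ⁻¹' {s} := by
    intro s
    ext x
    simp only [hα, Set.mem_iInter, Set.mem_preimage, Set.mem_singleton_iff, funext_iff, itin,
      Function.comp_apply]
    refine forall_congr' fun i => ?_
    rw [mul_comm, Function.iterate_mul, Function.iterate_succ_apply]
  refine le_antisymm (MeasurableSpace.generateFrom_le ?_) ?_
  · rintro _ ⟨s, rfl⟩
    exact ⟨{s}, measurableSet_singleton s, (hset s).symm⟩
  · rintro _ ⟨B, -, rfl⟩
    rw [← Set.biUnion_of_singleton B, Set.preimage_iUnion₂]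
    refine MeasurableSet.biUnion (Set.to_countable B) fun s _ => ?_
    exact MeasurableSpace.measurableSet_generateFrom ⟨s, (hset s).symm⟩

/-! ### Comparison of fibre entropies with the entropy rate -/

section MainArgument

open Real ProbabilityTheory

variable {X Y Z : Type*} [MeasurableSpace X] [MeasurableSpace Y] [MeasurableSpace Z]
  {μ : Measure X} [IsProbabilityMeasure μ] {ν : Measure Y} [IsProbabilityMeasure ν]
  {lam : Measure Z} [IsProbabilityMeasure lam]
  {π₀ : X → Z} {π₁ : X → Y}
  {Ky : Kernel Y X} [IsMarkovKernel Ky] {Kz : Kernel Z X} [IsMarkovKernel Kz]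
  {ι : Type} [Fintype ι] [MeasurableSpace ι] [MeasurableSingletonClass ι]

/-- If every finite partition pulled back from `Y` has zero entropy relative to `Z`, then the limit
of the conditional entropies of `f` given its future, computed over `Y`, is the entropy rate of `f`
relative to `Z`. -/
lemma limit_eq_rate (hY : Disint μ ν π₁ Ky) (hZ : Disint μ lam π₀ Kz)
    (hCP : ∀ B, MeasurableSet B → ∃ F, MeasurableSet F ∧
      μ ((π₀ ⁻¹' B \ π₁ ⁻¹' F) ∪ (π₁ ⁻¹' F \ π₀ ⁻¹' B)) = 0)
    {U : X → X} (hU : Measurable U) (hinv : EntInv lam Kz U)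
    (hzero : ∀ (J : Type) [Fintype J] [MeasurableSpace J] [MeasurableSingletonClass J] (d : Y → J),
      Measurable d → ZeroEnt lam Kz U (fun x => d (π₁ x)))
    {f : X → ι} (hf : Measurable f) {H : ℝ}
    (hH : Tendsto (fun n : ℕ => mH ν Ky (fun x => (f x, (itin U f n ∘ U) x))
      - mH ν Ky (itin U f n ∘ U)) atTop (𝓝 H)) :
    H = ⨅ n : ℕ, (1 / (n + 1 : ℝ)) * mH lam Kz (itin U f (n + 1)) := by
  set L := ⨅ n : ℕ, (1 / (n + 1 : ℝ)) * mH lam Kz (itin U f (n + 1)) with hLdef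
  have hL : Tendsto (fun n : ℕ => mH lam Kz (itin U f n) / n) atTop (𝓝 L) :=
    tendsto_mH_itin hU hinv hf
  have mg : ∀ n, Measurable (itin U f n ∘ U) := fun n => (measurable_itin hU hf n).comp hU
  refine le_antisymm ?_ ?_
  · -- the conditional entropies over `Y` are dominated by those over `Z`; average the latter
    have hle : ∀ n, mH ν Ky (fun x => (f x, (itin U f n ∘ U) x)) - mH ν Ky (itin U f n ∘ U) ≤
        mH lam Kz (fun x => (f x, (itin U f n ∘ U) x)) - mH lam Kz (itin U f n ∘ U) := by
      intro n
      refine le_of_forall_pos_le_add fun ε hε => ?_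
      obtain ⟨J, _, _, _, d, hd, hdε⟩ := exists_approx hY hZ hCP hf (mg n) hε
      have h1 := mH_cond lam Kz hf (mg n) ((mg n).prodMk (hd.comp hY.mp.measurable))
        fun x y h => (Prod.ext_iff.1 h).1
      simp only [Function.comp_def] at h1 hdε ⊢
      have h2 := (abs_le.1 hdε).2
      linarith
    have hces := hH.cesaro
    refine le_of_tendsto_of_tendsto hces hL (Eventually.of_forall fun N => ?_)
    simp only
    rw [mH_itin_eq_sum hU hinv hf N, div_eq_inv_mul]
    exact mul_le_mul_of_nonneg_left (Finset.sum_le_sum fun n _ => hle n) (by positivity)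
  · refine ge_of_tendsto hH (Eventually.of_forall fun n => le_of_forall_pos_le_add fun ε hε => ?_)
    obtain ⟨J, _, _, _, d, hd, hdε⟩ := exists_approx hY hZ hCP hf (mg n) hε
    have h1 := entropy_le_of_zeroEnt hU hinv hf (hd.comp hY.mp.measurable) (hzero J d hd) hL n
    simp only [Function.comp_def] at h1 hdε ⊢
    have h2 := (abs_le.1 hdε).1
    linarith

end MainArgument

/-! ### The relative Pinsker σ-algebra -/

section Assembly

open Real ProbabilityTheory

/-- A finite measurable partition is the partition into fibres of a map to its index set. -/
lemma FinPart.exists_map {X : Type*} [mX : MeasurableSpace X] (α : FinPart X mX) :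
    ∃ f : X → Fin α.k, Measurable f ∧ ∀ i, α.atom i = f ⁻¹' {i} := by
  have hx : ∀ x, ∃ i, x ∈ α.atom i := fun x => by
    have : x ∈ ⋃ i, α.atom i := α.cover ▸ Set.mem_univ x
    simpa using this
  choose f hf using hx
  have hα : ∀ i, α.atom i = f ⁻¹' {i} := by
    intro i
    ext x
    refine ⟨fun h => ?_, fun h => ?_⟩
    · by_contra hne
      exact Set.disjoint_left.1 (α.disj _ _ hne) (hf x) h
    · rw [← show f x = i from h]
      exact hf x
  exact ⟨f, measurable_to_countable' fun i => hα i ▸ α.meas i, hα⟩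

/-- The two-set partition `{sᶜ, s}`. -/
noncomputable def FinPart.ofSet {X : Type*} [mX : MeasurableSpace X] (s : Set X)
    (hs : MeasurableSet s) : FinPart X mX where
  k := 2
  atom i := ind s ⁻¹' {i}
  meas i := measurable_ind hs (measurableSet_singleton i)
  disj i j hij := Set.disjoint_left.2 fun x hx hx' => hij <| by
    rw [← show ind s x = i from hx, ← show ind s x = j from hx']
  cover := by ext x; simp

variable {X Z : Type*} [mX : MeasurableSpace X] [mZ : MeasurableSpace Z]
  {μ : Measure X} [IsProbabilityMeasure μ] {lam : Measure Z} [IsProbabilityMeasure lam]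
  {π₀ : X → Z} {Kz : Kernel Z X} [IsMarkovKernel Kz] {T : X → X}

/-- Every set of the relative Pinsker σ-algebra generates a partition of zero relative entropy. -/
lemma zeroEnt_of_relPinsker (hZ : Disint μ lam π₀ Kz) (hT : Measurable T)
    (hinv : EntInv lam Kz T) {s : Set X}
    (hs : MeasurableSet[relPinsker μ T (MeasurableSpace.comap π₀ mZ)] s) :
    MeasurableSet s ∧ ZeroEnt lam Kz T (ind s) := by
  have hle : relPinsker μ T (MeasurableSpace.comap π₀ mZ) ≤ zeroSigma hT hinv := by
    refine MeasurableSpace.generateFrom_le ?_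
    rintro _ ⟨α, hα0, i, rfl⟩
    obtain ⟨f, hf, hα⟩ := α.exists_map
    refine ⟨α.meas i, ?_⟩
    have hz : ZeroEnt lam Kz T f := by
      have := tendsto_mH_itin hT hinv hf
      rwa [← hZ.hPartCond_eq hT hf hα, hα0] at this
    refine hz.of_factors hT (measurable_ind (α.meas i)) hf fun x y hxy => ?_
    rw [ind_eq_iff, hα i]
    change f x = i ↔ f y = i
    rw [hxy]
  exact hle s hs

lemma relPinsker_of_zeroEnt (hZ : Disint μ lam π₀ Kz) (hT : Measurable T)
    (hinv : EntInv lam Kz T) {s : Set X} (hs : MeasurableSet s)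
    (h0 : ZeroEnt lam Kz T (ind s)) :
    MeasurableSet[relPinsker μ T (MeasurableSpace.comap π₀ mZ)] s := by
  refine MeasurableSpace.measurableSet_generateFrom ⟨FinPart.ofSet s hs, ?_, (1 : Fin 2), ind_preimage_one s⟩
  have e := hZ.hPartCond_eq hT (measurable_ind hs) (α := (FinPart.ofSet s hs).atom) fun _ => rfl
  exact e.trans (tendsto_nhds_unique (tendsto_mH_itin hT hinv (measurable_ind hs)) h0)

end Assembly

/-- **Lemma (fiberwise entropy integrates to relative entropy).**
Let `π : (X,B,μ,T) → (Z,A,λ,R)` be a factor map between invertible Lebesgue systems,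
`π₁ : (X,B,μ,T) → (Y,D,ν,S)` the Pinsker factor of `(X,B,μ,T)` with respect to `π`, and
`μ = ∫_Y μ_y dν(y)` the disintegration of `μ` over `(Y,D,ν,S)`. For `ℓ ≥ 1` and a finite
measurable partition `α`, let `h_μ(T^ℓ,α,y) := lim_{n→∞} H_{μ_y}(α | ⋁_{i=1}^n T^{-iℓ}α)`.
Then `∫_Y h_μ(T^ℓ,α,y) dν(y) = h_μ(T^ℓ, α | π⁻¹(A))`. -/
theorem integral_fiber_entropy_eq_relative_entropy
    {X Y Z : Type*}
    [mX : MeasurableSpace X] [StandardBorelSpace X]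
    [mY : MeasurableSpace Y] [StandardBorelSpace Y]
    [mZ : MeasurableSpace Z] [StandardBorelSpace Z]
    (μ : Measure X) (ν : Measure Y) (lam : Measure Z)
    [IsProbabilityMeasure μ] [IsProbabilityMeasure ν] [IsProbabilityMeasure lam]
    (T : X → X) (S : Y → Y) (R : Z → Z)
    (hTbij : Function.Bijective T) (hSbij : Function.Bijective S)
    (hRbij : Function.Bijective R)
    (hT : MeasurePreserving T μ μ) (hS : MeasurePreserving S ν ν)
    (hR : MeasurePreserving R lam lam)
    (π : X → Z) (hπ : MeasurePreserving π μ lam) (hπT : π ∘ T = R ∘ π)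
    (π₁ : X → Y) (hπ₁ : MeasurePreserving π₁ μ ν) (hπ₁T : π₁ ∘ T = S ∘ π₁)
    (hPinsker : EqModMeasure μ (MeasurableSpace.comap π₁ mY)
      (relPinsker μ T (MeasurableSpace.comap π mZ)))
    (μy : Y → Measure X) (hμyprob : ∀ y, IsProbabilityMeasure (μy y))
    (hfiber : ∀ᵐ y ∂ν, μy y (π₁ ⁻¹' {y}) = 1)
    (hμymeas : ∀ s : Set X, MeasurableSet[mX] s → Measurable fun y => μy y s)
    (hdisint : ∀ s : Set X, MeasurableSet[mX] s → μ s = ∫⁻ y, μy y s ∂ν)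
    (ℓ : ℕ) (hℓ : 1 ≤ ℓ) (α : FinPart X mX)
    (h : Y → ℝ)
    (hlim : ∀ᵐ y ∂ν, Tendsto
      (fun n : ℕ => condH (μy y) α.atom (tailJoinSigma T α.atom ℓ n)) atTop (𝓝 (h y))) :
    ∫ y, h y ∂ν = hPartCond μ (T^[ℓ]) α.atom (MeasurableSpace.comap π mZ) := by
  have : Nonempty X := nonempty_of_isProbabilityMeasure μ
  obtain ⟨f, hf, hα⟩ := α.exists_map
  have hUm : Measurable (T^[ℓ]) := hT.measurable.iterate ℓ
  -- the fibre measures over `Z` and over `Y`, as Markov kernels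
  have hZ : Disint μ lam π (ProbabilityTheory.condDistrib id π μ) := disint_condDistrib hπ
  set Kz := ProbabilityTheory.condDistrib id π μ with hKz
  let Ky : ProbabilityTheory.Kernel Y X := ⟨μy, Measure.measurable_of_measurable_coe _ hμymeas⟩
  have hKyM : ProbabilityTheory.IsMarkovKernel Ky := ⟨hμyprob⟩
  have hY : Disint μ ν π₁ Ky := by
    refine disint_of_lintegral hπ₁ fun A B hA hB => ?_
    rw [hdisint _ (hA.inter (hπ₁.measurable hB)), ← lintegral_indicator hB]
    refine lintegral_congr_ae ?_
    filter_upwards [hfiber] with y hy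
    have hyp := hμyprob y
    have hconc : ∀ᵐ x ∂(μy y), π₁ x = y := by
      rw [← prob_compl_eq_zero_iff (hπ₁.measurable (measurableSet_singleton y))] at hy
      exact hy
    by_cases hyB : y ∈ B
    · rw [Set.indicator_of_mem hyB]
      refine measure_congr ?_
      filter_upwards [hconc] with x hx
      refine propext ⟨fun h => h.1, fun h => ⟨h, ?_⟩⟩
      change π₁ x ∈ B
      rwa [hx]
    · rw [Set.indicator_of_notMem hyB]
      refine measure_mono_null (fun x hx => ?_) (ae_iff.1 hconc)
      intro hxy
      exact hyB (hxy ▸ hx.2)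
  have hRe : MeasurableEmbedding R := hR.measurable.measurableEmbedding hRbij.injective
  have hinvT : EntInv lam Kz T := hZ.entInv hT hR hRe hπT
  have hinv : EntInv lam Kz (T^[ℓ]) := hinvT.iterate hT.measurable ℓ
  -- sets pulled back from `Z` lie in the relative Pinsker σ-algebra, hence come from `Y`
  have hCP : ∀ B, MeasurableSet B → ∃ F, MeasurableSet F ∧
      μ ((π ⁻¹' B \ π₁ ⁻¹' F) ∪ (π₁ ⁻¹' F \ π ⁻¹' B)) = 0 := by
    intro B hB
    obtain ⟨_, ⟨F, hF, rfl⟩, h0⟩ := hPinsker.2 (π ⁻¹' B)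
      (relPinsker_of_zeroEnt hZ hT.measurable hinvT (hπ.measurable hB)
        (hZ.zeroEnt_preimage hT.measurable hinvT hB))
    exact ⟨F, hF, h0⟩
  -- partitions pulled back from `Y` have zero entropy relative to `Z`
  have hzero : ∀ (J : Type) [Fintype J] [MeasurableSpace J] [MeasurableSingletonClass J]
      (d : Y → J), Measurable d → ZeroEnt lam Kz (T^[ℓ]) (fun x => d (π₁ x)) := by
    intro J _ _ _ d hd
    have hdm : Measurable fun x => d (π₁ x) := hd.comp hπ₁.measurable
    refine ZeroEnt.iterate hT.measurable ?_ hdm hℓ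
    refine zeroEnt_of_fibers hT.measurable hdm fun j => ?_
    obtain ⟨t, ht, h0⟩ := hPinsker.1 (π₁ ⁻¹' (d ⁻¹' {j})) ⟨_, hd (measurableSet_singleton j), rfl⟩
    exact hZ.zeroEnt_congr hT (ind_ae_eq h0)
      (zeroEnt_of_relPinsker hZ hT.measurable hinvT ht).2
  rw [hZ.hPartCond_eq hUm hf hα]
  refine limit_eq_rate hY hZ hCP hUm hinv hzero hf ?_
  have mg : ∀ n, Measurable (itin (T^[ℓ]) f n ∘ T^[ℓ]) := fun n => (measurable_itin hUm hf n).comp hUm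
  have hcond : ∀ n y, condH (μy y) α.atom (tailJoinSigma T α.atom ℓ n) =
      fH (Ky y) (fun x => (f x, (itin (T^[ℓ]) f n ∘ T^[ℓ]) x))
        - fH (Ky y) (itin (T^[ℓ]) f n ∘ T^[ℓ]) := by
    intro n y
    rw [tailJoinSigma_eq T hα, show α.atom = fun i => f ⁻¹' {i} from funext hα]
    exact condH_finite (Ky y) hf (mg n)
  have hint : ∀ n, mH ν Ky (fun x => (f x, (itin (T^[ℓ]) f n ∘ T^[ℓ]) x))
      - mH ν Ky (itin (T^[ℓ]) f n ∘ T^[ℓ])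
      = ∫ y, condH (μy y) α.atom (tailJoinSigma T α.atom ℓ n) ∂ν := by
    intro n
    simp_rw [hcond]
    exact (integral_sub (integrable_fH ν Ky (hf.prodMk (mg n))) (integrable_fH ν Ky (mg n))).symm
  simp_rw [hint]
  refine tendsto_integral_of_dominated_convergence (fun _ => (α.k : ℝ)) (fun n => ?_)
    (integrable_const _) (fun n => ae_of_all _ fun y => ?_) hlim
  · simp_rw [hcond]
    exact ((measurable_fH Ky (hf.prodMk (mg n))).sub
      (measurable_fH Ky (mg n))).aestronglyMeasurable
  · rw [hcond, Real.norm_eq_abs, abs_of_nonneg]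
    · have h1 := fH_cond (Ky y) hf (g := fun _ => ()) (mg n) fun _ _ _ => rfl
      have h2 : fH (Ky y) (fun x => (f x, ())) ≤ fH (Ky y) f :=
        fH_mono _ hf fun x y h => by simpa using h
      have h3 := fH_le_card (Ky y) f
      rw [Fintype.card_fin] at h3
      have h4 := fH_nonneg (Ky y) fun _ : X => ()
      linarith
    · exact sub_nonneg.2 (fH_mono _ (hf.prodMk (mg n)) fun x y h => (Prod.ext_iff.1 h).2)
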